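/- Let h_1, …, h_l ∈ K[z_n] with h_1 | h_2 | ⋯ | h_l, let f ∈ K[z_2, …, z_n], let V ∈ K[z_2, …, z_n]^{l×l} be a unimodular matrix, and set B = diag(h_1, …, h_l) · V · diag(1, …, 1, z_1 − f). If for every k = 1, …, l−1 the product h_1⋯h_k is a greatest common divisor of the k×k minors of B and J_k(B) = R, then B is equivalent to diag(h_1, h_2, …, h_{l−1}, (z_1 − f) h_l). -/

import Mathlib

open MvPolynomial Matrix

section Defs

variable {A : Type*} [CommRing A]

/-- The set of all `k × k` minors of a matrix. -/
def minorsSet {l m : ℕ} (F : Matrix (Fin l) (Fin m) A) (k : ℕ) : Set A :=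
  { p | ∃ (r : Fin k ↪ Fin l) (c : Fin k ↪ Fin m), p = (F.submatrix ⇑r ⇑c).det }

/-- `d` is a greatest common divisor of the `k × k` minors of `F`. -/
def IsGcdMinors {l m : ℕ} (F : Matrix (Fin l) (Fin m) A) (k : ℕ) (d : A) : Prop :=
  (∀ p ∈ minorsSet F k, d ∣ p) ∧ ∀ e : A, (∀ p ∈ minorsSet F k, e ∣ p) → e ∣ d

/-- The ideal generated by the `k × k` reduced minors of `F`, relative to a gcd `d`
of the `k × k` minors (the reduced minors are the `v` with `d * v` a minor). -/
def reducedIdeal {l m : ℕ} (F : Matrix (Fin l) (Fin m) A) (k : ℕ) (d : A) : Ideal A :=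
  Ideal.span { v : A | d * v ∈ minorsSet F k }

/-- `J_k(F) = R`: the `k × k` reduced minors of `F` generate the unit ideal. -/
def JkUnit {l m : ℕ} (F : Matrix (Fin l) (Fin m) A) (k : ℕ) : Prop :=
  ∃ d : A, IsGcdMinors F k d ∧ reducedIdeal F k d = ⊤

/-- `F` has rank `r`: some `r × r` minor is nonzero and all `(r+1) × (r+1)` minors vanish. -/
def HasRank {l m : ℕ} (F : Matrix (Fin l) (Fin m) A) (r : ℕ) : Prop :=
  (∃ p ∈ minorsSet F r, p ≠ 0) ∧ ∀ p ∈ minorsSet F (r + 1), p = 0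

/-- Equivalence of matrices: `F₁ = U * F₂ * V` for unimodular `U`, `V`. -/
def MatEquiv {l m : ℕ} (F₁ F₂ : Matrix (Fin l) (Fin m) A) : Prop :=
  ∃ (U : Matrix (Fin l) (Fin l) A) (V : Matrix (Fin m) (Fin m) A),
    IsUnit U.det ∧ IsUnit V.det ∧ F₁ = U * F₂ * V

/-- The rectangular diagonal matrix with diagonal entries `Φ`. -/
def smithDiag {l m : ℕ} (Φ : Fin l → A) : Matrix (Fin l) (Fin m) A :=
  Matrix.of fun i j => if (i : ℕ) = (j : ℕ) then Φ i else 0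

/-- `F` (of rank `r`) is equivalent to its Smith form: there are diagonal entries `Φ` such that
for each `i ≤ r` the product `Φ_1 ⋯ Φ_i` is a gcd of the `i × i` minors of `F`
(i.e. `Φ_i = d_i(F)/d_{i-1}(F)`), `Φ_i = 0` for `i > r`, and `F` is equivalent to
the diagonal matrix with entries `Φ`. -/
def SmithEquivAt {l m : ℕ} (F : Matrix (Fin l) (Fin m) A) (r : ℕ) : Prop :=
  ∃ Φ : Fin l → A,
    (∀ i : Fin l, (i : ℕ) < r →
      IsGcdMinors F ((i : ℕ) + 1) (∏ j ∈ Finset.Iic i, Φ j)) ∧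
    (∀ i : Fin l, r ≤ (i : ℕ) → Φ i = 0) ∧
    MatEquiv F (smithDiag Φ)

/-- `F` is equivalent to its Smith form. -/
def EquivToSmith {l m : ℕ} (F : Matrix (Fin l) (Fin m) A) : Prop :=
  ∃ r : ℕ, HasRank F r ∧ SmithEquivAt F r

end Defs

namespace SF

section Basic
universe u v
variable {A : Type v} [CommRing A]
variable {P Q P' Q' : Type u} [AddCommGroup P] [Module A P] [AddCommGroup Q] [Module A Q]
variable [AddCommGroup P'] [Module A P'] [AddCommGroup Q'] [Module A Q']

/-- Existence of a finite dual basis. -/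
def DB (A : Type v) [CommRing A] (P : Type u) [AddCommGroup P] [Module A P] : Prop :=
  ∃ (n : ℕ) (y : Fin n → P) (θ : Fin n → P →ₗ[A] A), ∀ x, x = ∑ j, θ j x • y j

/-- The determinantal ideals of a linear map. -/
def Jk (F : P →ₗ[A] Q) (k : ℕ) : Ideal A :=
  Ideal.span {d | ∃ (ψ : Fin k → (Q →ₗ[A] A)) (e : Fin k → P),
    d = (Matrix.of fun i j => ψ i (F (e j))).det}

/-- Bases adapted to `F`, up to the scalar `s`. -/
structure IsAd (F : P →ₗ[A] Q) (m : ℕ) (h : ℕ → A) (s : A) (p : Fin m → P)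
    (π : Fin m → P →ₗ[A] A) (q : Fin m → Q) (κ : Fin m → Q →ₗ[A] A) : Prop where
  pp : ∀ i j, π i (p j) = if i = j then s else 0
  ps : ∀ x, s • x = ∑ i, π i x • p i
  qq : ∀ i j, κ i (q j) = if i = j then s else 0
  qs : ∀ x, s • x = ∑ i, κ i x • q i
  ff : ∀ i : Fin m, F (p i) = h i • q i

def Ad (F : P →ₗ[A] Q) (m : ℕ) (h : ℕ → A) (s : A) : Prop :=
  ∃ p π q κ, IsAd F m h s p π q κ

/-- `P = P' ⊕ A x0`. -/
structure Spl (i : P' →ₗ[A] P) (r : P →ₗ[A] P') (l : P →ₗ[A] A) (x0 : P) : Prop where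
  ri : ∀ x, r (i x) = x
  ir : ∀ x, i (r x) = x - l x • x0
  lx : l x0 = 1

theorem Spl.rx {i : P' →ₗ[A] P} {r : P →ₗ[A] P'} {l : P →ₗ[A] A} {x0 : P} (h : Spl i r l x0) :
    r x0 = 0 := by
  have h1 := h.ir x0
  rw [h.lx, one_smul, sub_self] at h1
  have := h.ri (r x0)
  rw [h1, map_zero] at this
  exact this.symm

theorem Spl.li {i : P' →ₗ[A] P} {r : P →ₗ[A] P'} {l : P →ₗ[A] A} {x0 : P} (h : Spl i r l x0)
    (x : P') : l (i x) = 0 := by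
  have h1 := h.ir (i x)
  rw [h.ri] at h1
  have h2 : l (i x) • x0 = 0 := by
    have := congrArg (fun t => i x - t) h1
    simpa using this.symm
  have := congrArg l h2
  simpa [h.lx] using this

theorem Spl.inj {i : P' →ₗ[A] P} {r : P →ₗ[A] P'} {l : P →ₗ[A] A} {x0 : P} (h : Spl i r l x0)
    {x y : P'} (hxy : i x = i y) : x = y := by
  rw [← h.ri x, ← h.ri y, hxy]

theorem exists_Spl (l : P →ₗ[A] A) (x0 : P) (h : l x0 = 1) :
    ∃ r : P →ₗ[A] (LinearMap.ker l), Spl (LinearMap.ker l).subtype r l x0 := by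
  refine ⟨LinearMap.codRestrict _ (LinearMap.id - l.smulRight x0) ?_, ?_, ?_, h⟩
  · intro c; simp [h]
  · intro x
    apply Subtype.ext
    change (x : P) - l x • x0 = x
    rw [LinearMap.mem_ker.1 x.2]; simp
  · intro x; rfl

theorem DB.spl (hP : DB A P) {i : P' →ₗ[A] P} {r : P →ₗ[A] P'} {l : P →ₗ[A] A} {x0 : P}
    (h : Spl i r l x0) : DB A P' := by
  obtain ⟨n, y, θ, hy⟩ := hP
  refine ⟨n, fun j => r (y j), fun j => (θ j).comp i, fun x => ?_⟩
  have := congrArg r (hy (i x))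
  rw [h.ri, map_sum] at this
  simpa using this

theorem DB.tf [IsDomain A] (hP : DB A P) {s : A} (hs : s ≠ 0) {x : P} (h : s • x = 0) : x = 0 := by
  obtain ⟨n, y, θ, hy⟩ := hP
  rw [hy x]
  refine Finset.sum_eq_zero fun j _ => ?_
  have := congrArg (θ j) h
  simp [hs] at this
  simp [this]

theorem DB.tf' [IsDomain A] (hP : DB A P) {s : A} (hs : s ≠ 0) {x y : P} (h : s • x = s • y) :
    x = y := by
  rw [← sub_eq_zero]; apply hP.tf hs; rw [smul_sub, h, sub_self]

theorem IsAd.kap [IsDomain A] {F : P →ₗ[A] Q} {m : ℕ} {h : ℕ → A} {s : A} {p : Fin m → P}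
    {π : Fin m → P →ₗ[A] A} {q : Fin m → Q} {κ : Fin m → Q →ₗ[A] A} (hs : s ≠ 0)
    (H : IsAd F m h s p π q κ) (i : Fin m) (x : P) : κ i (F x) = h i * π i x := by
  apply mul_left_cancel₀ hs
  have : s * κ i (F x) = κ i (F (s • x)) := by simp
  rw [this, H.ps]
  simp [H.ff, H.qq]
  ring

/-- dividing a functional-divisible map -/
theorem exists_div [IsDomain A] (hQ : DB A Q) (F : P →ₗ[A] Q) {c : A} (hc : c ≠ 0)
    (hF : ∀ (ψ : Q →ₗ[A] A) x, c ∣ ψ (F x)) : ∃ G : P →ₗ[A] Q, F = c • G := by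
  have key : ∀ x, ∃ y, F x = c • y := by
    intro x
    obtain ⟨n, y, θ, hy⟩ := hQ
    choose d hd using fun j => hF (θ j) x
    refine ⟨∑ j, d j • y j, ?_⟩
    rw [hy (F x), Finset.smul_sum]
    exact Finset.sum_congr rfl fun j _ => by rw [hd, mul_smul]
  choose G hG using key
  refine ⟨⟨⟨G, ?_⟩, ?_⟩, ?_⟩
  · intro x y
    apply hQ.tf' hc
    rw [smul_add, ← hG, ← hG, ← hG, map_add]
  · intro a x
    apply hQ.tf' hc
    simp only [RingHom.id_apply]
    rw [smul_comm, ← hG, ← hG, map_smul]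
  · ext x; exact hG x

theorem det_rank_one_mem {k : ℕ} (I : Ideal A) (N : Matrix (Fin (k+1)) (Fin (k+1)) A)
    (hN : ∀ i j, (N.submatrix (Fin.succAbove i) (Fin.succAbove j)).det ∈ I) (u w : Fin (k+1) → A) :
    (Matrix.of fun i j => N i j + u i * w j).det ∈ I := by
  set M : Matrix (Fin (k+2)) (Fin (k+2)) A :=
    Matrix.of (Fin.cons (Fin.cons 1 (fun j => - w j)) (fun i => Fin.cons (u i) (N i))) with hM
  set M2 : Matrix (Fin (k+2)) (Fin (k+2)) A :=
    Matrix.of (Fin.cons (Fin.cons 1 (fun j => - w j))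
      (fun i => Fin.cons 0 (fun j => N i j + u i * w j))) with hM2
  have h1 : M.det = M2.det := by
    refine Matrix.det_eq_of_forall_row_eq_smul_add_const (Fin.cons 0 u) 0 (by simp) ?_
    intro i j
    refine Fin.cases ?_ (fun i => ?_) i <;> refine Fin.cases ?_ (fun j => ?_) j <;> simp [hM, hM2]
  have h2 : M2.det = (Matrix.of fun i j => N i j + u i * w j).det := by
    rw [Matrix.det_succ_column_zero, Fin.sum_univ_succ]
    simp [hM2]
    congr 1
  rw [← h2, ← h1, Matrix.det_succ_row_zero]
  refine Ideal.sum_mem _ fun j _ => Ideal.mul_mem_left _ _ ?_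
  refine Fin.cases ?_ (fun j => ?_) j
  · have : M.submatrix Fin.succ (Fin.succAbove 0) = N := by
      ext i j; simp [hM]
    rw [this, Matrix.det_succ_row_zero]
    exact Ideal.sum_mem _ fun j _ => Ideal.mul_mem_left _ _ (by simpa using hN 0 j)
  · rw [Matrix.det_succ_column_zero]
    refine Ideal.sum_mem _ fun i _ => Ideal.mul_mem_left _ _ ?_
    have : (M.submatrix Fin.succ (Fin.succAbove j.succ)).submatrix (Fin.succAbove i) Fin.succ
       = N.submatrix (Fin.succAbove i) (Fin.succAbove j) := by
      ext a b; simp [hM]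
    rw [this]; exact hN i j

theorem Jk_spl {F : P →ₗ[A] Q} {F' : P' →ₗ[A] Q'} {iP : P' →ₗ[A] P} {rP : P →ₗ[A] P'}
    {iQ : Q' →ₗ[A] Q} {rQ : Q →ₗ[A] Q'} {χ : Q →ₗ[A] A} {x0 : P}
    (hP : Spl iP rP (χ.comp F) x0) (hQ : Spl iQ rQ χ (F x0)) (hF : ∀ x, iQ (F' x) = F (iP x))
    (k : ℕ) : Jk F' k = Jk F (k+1) := by
  have hF2 : ∀ x, rQ (F (iP x)) = F' x := fun x => by rw [← hF, hQ.ri]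
  apply le_antisymm
  · refine Ideal.span_le.2 ?_
    rintro d ⟨ψ, e, rfl⟩
    refine Ideal.subset_span ⟨Fin.cons χ (fun i => (ψ i).comp rQ), Fin.cons x0 (fun j => iP (e j)), ?_⟩
    rw [Matrix.det_succ_row_zero, Fin.sum_univ_succ, Finset.sum_eq_zero]
    · have := hQ.lx
      simp [this]
      congr 1
      ext i j
      simp [hF2]
    · intro j _
      have := hP.li (e j)
      simp at this
      simp [this]
  · refine Ideal.span_le.2 ?_
    rintro d ⟨ψ, e, rfl⟩
    have : (Matrix.of fun i j => (ψ i) (F (e j))) = Matrix.of fun i j =>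
        (Matrix.of fun i j => (ψ i).comp iQ (F' (rP (e j)))) i j + ψ i (F x0) * χ (F (e j)) := by
      ext i j
      simp only [Matrix.of_apply, LinearMap.comp_apply]
      rw [hF, hP.ir]
      simp
      ring
    rw [this]
    apply det_rank_one_mem
    intro i j
    exact Ideal.subset_span ⟨fun a => (ψ (i.succAbove a)).comp iQ, fun b => rP (e (j.succAbove b)), rfl⟩

theorem Ad_join {F : P →ₗ[A] Q} {F' : P' →ₗ[A] Q'} {iP : P' →ₗ[A] P} {rP : P →ₗ[A] P'}
    {iQ : Q' →ₗ[A] Q} {rQ : Q →ₗ[A] Q'} {χ : Q →ₗ[A] A} {x0 : P}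
    (hP : Spl iP rP (χ.comp F) x0) (hQ : Spl iQ rQ χ (F x0)) (hF : ∀ x, iQ (F' x) = F (iP x))
    {m : ℕ} {h : ℕ → A} (h0 : h 0 = 1) (H : Ad F' m (fun i => h (i+1)) 1) : Ad F (m+1) h 1 := by
  obtain ⟨p, π, q, κ, H⟩ := H
  have hx := hP.lx
  simp only [LinearMap.comp_apply] at hx
  have hp : ∀ x, χ (F (iP x)) = 0 := fun x => by simpa using hP.li x
  refine ⟨Fin.cons x0 (fun i => iP (p i)), Fin.cons (χ.comp F) (fun i => (π i).comp rP),
    Fin.cons (F x0) (fun i => iQ (q i)), Fin.cons χ (fun i => (κ i).comp rQ), ⟨?_, ?_, ?_, ?_, ?_⟩⟩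
  · intro i j
    refine Fin.cases ?_ (fun i => ?_) i <;> refine Fin.cases ?_ (fun j => ?_) j <;>
      simp [hx, hp, hP.rx, hP.ri, H.pp, Fin.succ_ne_zero, (Fin.succ_ne_zero _).symm]
  · intro x
    have := congrArg iP (H.ps (rP x))
    rw [map_smul, hP.ir, map_sum] at this
    rw [Fin.sum_univ_succ]
    simp at this ⊢
    rw [← this]; abel
  · intro i j
    refine Fin.cases ?_ (fun i => ?_) i <;> refine Fin.cases ?_ (fun j => ?_) j <;>
      simp [hx, hQ.li, hQ.rx, hQ.ri, H.qq, Fin.succ_ne_zero, (Fin.succ_ne_zero _).symm]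
  · intro x
    have := congrArg iQ (H.qs (rQ x))
    rw [map_smul, hQ.ir, map_sum] at this
    rw [Fin.sum_univ_succ]
    simp at this ⊢
    rw [← this]; abel
  · intro i
    refine Fin.cases ?_ (fun i => ?_) i
    · simp [h0]
    · simp [← hF, H.ff]

theorem Ad_spl [IsDomain A] {F : P →ₗ[A] Q} {F' : P' →ₗ[A] Q'} {iP : P' →ₗ[A] P}
    {rP : P →ₗ[A] P'}
    {iQ : Q' →ₗ[A] Q} {rQ : Q →ₗ[A] Q'} {χ : Q →ₗ[A] A} {x0 : P}
    (hP : Spl iP rP (χ.comp F) x0) (hQ : Spl iQ rQ χ (F x0)) (hF : ∀ x, iQ (F' x) = F (iP x))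
    {m : ℕ} {h : ℕ → A} (h0 : h 0 = 1) {s : A} (hs : s ≠ 0) {p : Fin (m+1) → P}
    {π : Fin (m+1) → P →ₗ[A] A} {q : Fin (m+1) → Q} {κ : Fin (m+1) → Q →ₗ[A] A}
    (H : IsAd F (m+1) h s p π q κ) : Ad F' m (fun i => h (i+1)) (π 0 x0 * s) := by
  have hk : κ 0 (F x0) = π 0 x0 := by simpa [h0] using H.kap hs 0 x0
  have aux : ∀ {M N : Type u} [AddCommGroup M] [Module A M] [AddCommGroup N] [Module A N]
      {i : N →ₗ[A] M} {r : M →ₗ[A] N} {l : M →ₗ[A] A} {x0 : M} (S : Spl i r l x0)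
      {p : Fin (m+1) → M} {π : Fin (m+1) → M →ₗ[A] A}
      (pp : ∀ i j, π i (p j) = if i = j then s else 0) (ps : ∀ x, s • x = ∑ i, π i x • p i),
      (∀ a b : Fin m, ((π 0 x0 • π a.succ - π a.succ x0 • π 0).comp i) (r (p b.succ)) =
        if a = b then π 0 x0 * s else 0) ∧
      (∀ x, (π 0 x0 * s) • x = ∑ a : Fin m, ((π 0 x0 • π a.succ - π a.succ x0 • π 0).comp i) x
         • r (p a.succ)) := by
    intro M N _ _ _ _ i r l x0 S p π pp ps
    constructor
    · intro a b
      simp only [LinearMap.comp_apply, S.ir, map_sub, map_smul]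
      simp [pp, (Fin.succ_ne_zero _).symm]
      right; ring
    · intro x
      have e1 := congrArg r (ps (i x))
      have e2 := congrArg r (ps x0)
      rw [map_smul, S.ri, map_sum, Fin.sum_univ_succ] at e1
      rw [map_smul, S.rx, map_sum, Fin.sum_univ_succ, smul_zero] at e2
      simp only [map_smul] at e1 e2
      have e3 : ∑ a : Fin m, ((π 0 x0 • π a.succ - π a.succ x0 • π 0).comp i) x • r (p a.succ)
        = π 0 x0 • ∑ a : Fin m, π a.succ (i x) • r (p a.succ) -
          π 0 (i x) • ∑ a : Fin m, π a.succ x0 • r (p a.succ) := by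
        rw [Finset.smul_sum, Finset.smul_sum, ← Finset.sum_sub_distrib]
        refine Finset.sum_congr rfl fun a _ => ?_
        simp [sub_smul, mul_smul]
        rw [smul_comm]
      rw [e3, mul_smul, e1]
      have e4 := eq_neg_of_add_eq_zero_right e2.symm
      rw [e4, smul_add, smul_neg, smul_comm (π 0 x0) (π 0 (i x))]
      abel
  obtain ⟨a1, a2⟩ := aux hP H.pp H.ps
  obtain ⟨b1, b2⟩ := aux hQ H.qq H.qs
  rw [hk] at b1 b2
  refine ⟨_, _, _, _, ⟨a1, a2, b1, b2, ?_⟩⟩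
  intro i
  apply hQ.inj
  rw [hF, hP.ir, map_smul, hQ.ir]
  simp [H.ff, smul_sub, mul_smul]

theorem IsAd.change [IsDomain A] {F : P →ₗ[A] Q} {m : ℕ} {h : ℕ → A} (h0 : h 0 = 1) {s : A}
    {p : Fin (m+2) → P} {π : Fin (m+2) → P →ₗ[A] A} {q : Fin (m+2) → Q}
    {κ : Fin (m+2) → Q →ₗ[A] A} (H : IsAd F (m+2) h s p π q κ) (a c α β μ : A)
    (hμ : μ = α * a + β * (h 1 * c)) :
    ∃ p' π' q' κ', IsAd F (m+2) h (s * μ) p' π' q' κ' ∧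
      π' 0 = α • π 0 + (β * h 1) • π 1 := by
  refine ⟨Fin.cons (a • p 0 + c • p 1) (Fin.cons (α • p 1 - (β * h 1) • p 0)
      (fun i => p i.succ.succ)),
    Fin.cons (α • π 0 + (β * h 1) • π 1) (Fin.cons (a • π 1 - c • π 0)
      (fun i => μ • π i.succ.succ)),
    Fin.cons (a • q 0 + (h 1 * c) • q 1) (Fin.cons (α • q 1 - β • q 0)
      (fun i => q i.succ.succ)),
    Fin.cons (α • κ 0 + β • κ 1) (Fin.cons (a • κ 1 - (h 1 * c) • κ 0)
      (fun i => μ • κ i.succ.succ)), ⟨?_, ?_, ?_, ?_, ?_⟩, rfl⟩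
  · intro i j
    have e1 : ∀ i : Fin m, (1 : Fin (m+2)) ≠ i.succ.succ := fun i hi => by
      simpa using congrArg Fin.val hi
    refine Fin.cases ?_ (fun i => ?_) i <;> [skip; refine Fin.cases ?_ (fun i => ?_) i] <;>
      (refine Fin.cases ?_ (fun j => ?_) j <;> [skip; refine Fin.cases ?_ (fun j => ?_) j]) <;>
      simp [H.pp, Fin.succ_ne_zero, (Fin.succ_ne_zero _).symm, e1, (e1 _).symm, hμ] <;> ring
  · intro x
    have := H.ps x
    rw [mul_comm, mul_smul, this, Fin.sum_univ_succ, Fin.sum_univ_succ, Fin.sum_univ_succ,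
      Fin.sum_univ_succ]
    simp [mul_smul, Finset.smul_sum]
    rw [hμ]; module
  · intro i j
    have e1 : ∀ i : Fin m, (1 : Fin (m+2)) ≠ i.succ.succ := fun i hi => by
      simpa using congrArg Fin.val hi
    refine Fin.cases ?_ (fun i => ?_) i <;> [skip; refine Fin.cases ?_ (fun i => ?_) i] <;>
      (refine Fin.cases ?_ (fun j => ?_) j <;> [skip; refine Fin.cases ?_ (fun j => ?_) j]) <;>
      simp [H.qq, Fin.succ_ne_zero, (Fin.succ_ne_zero _).symm, e1, (e1 _).symm, hμ] <;> ring
  · intro x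
    have := H.qs x
    rw [mul_comm, mul_smul, this, Fin.sum_univ_succ, Fin.sum_univ_succ, Fin.sum_univ_succ,
      Fin.sum_univ_succ]
    simp [mul_smul, Finset.smul_sum]
    rw [hμ]; module
  · intro i
    have f0 := H.ff 0
    have f1 := H.ff 1
    simp [h0] at f0 f1
    refine Fin.cases ?_ (fun i => ?_) i <;> [skip; refine Fin.cases ?_ (fun i => ?_) i]
    · simp [h0, f0, f1]; module
    · simp [f0, f1]; module
    · simp [H.ff]

theorem Jk_smul_le (F : P →ₗ[A] Q) (c : A) (k : ℕ) :
    Jk (c • F) k = Ideal.span {c ^ k} * Jk F k := by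
  have : ∀ (ψ : Fin k → (Q →ₗ[A] A)) (e : Fin k → P),
    (Matrix.of fun i j => ψ i ((c • F) (e j))).det =
      c ^ k * (Matrix.of fun i j => ψ i (F (e j))).det := by
    intro ψ e
    have : (Matrix.of fun i j => ψ i ((c • F) (e j))) = c • (Matrix.of fun i j => ψ i (F (e j))) := by
      ext i j; simp
    rw [this, Matrix.det_smul]; simp
  unfold Jk
  rw [Ideal.span_mul_span']
  congr 1
  refine Set.ext fun d => ⟨?_, ?_⟩
  · rintro ⟨ψ, e, rfl⟩
    exact Set.mem_mul.2 ⟨c ^ k, rfl, _, ⟨ψ, e, rfl⟩, (this ψ e).symm⟩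
  · intro hd
    obtain ⟨a, ha, b, ⟨ψ, e, rfl⟩, rfl⟩ := Set.mem_mul.1 hd
    rw [Set.mem_singleton_iff.1 ha]
    exact ⟨ψ, e, (this ψ e).symm⟩

theorem Jk_one_mem (F : P →ₗ[A] Q) (ψ : Q →ₗ[A] A) (x : P) : ψ (F x) ∈ Jk F 1 :=
  Ideal.subset_span ⟨fun _ => ψ, fun _ => x, by simp⟩

theorem Jk_zero (k : ℕ) : Jk (0 : P →ₗ[A] Q) (k+1) = ⊥ := by
  rw [eq_bot_iff]
  refine Ideal.span_le.2 ?_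
  rintro d ⟨ψ, e, rfl⟩
  simp [Matrix.det_succ_row_zero]

end Basic

section Part2
section Bil
variable {A E V W : Type*} [CommRing A] [CommRing E] [IsDomain E] [IsPrincipalIdealRing E]
  [AddCommGroup V] [Module A V] [AddCommGroup W] [Module A W]

theorem bilinear_aux (φ : A →+* E) (hφ : Function.Surjective φ) (β : V → W → E)
    (hl : ∀ a v v' w, β (a • v + v') w = φ a * β v w + β v' w)
    (hr : ∀ a v w w', β v (a • w + w') = φ a * β v w + β v w')
    (v : V) (w : W) (hm : ∀ v' w', β v' w' ∣ β v w → β v w ∣ β v' w') :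
    (∀ v', β v w ∣ β v' w) ∧ (∀ w', β v w ∣ β v w') := by
  classical
  have key : ∀ x y : E, ∃ a b : E, (a * x + b * y) ∣ x ∧ (a * x + b * y) ∣ y := by
    intro x y
    obtain ⟨g, hg⟩ := (IsPrincipalIdealRing.principal (Ideal.span {x, y})).principal
    have h1 : g ∈ Ideal.span {x, y} := by rw [hg]; exact Submodule.mem_span_singleton_self g
    obtain ⟨a, b, hab⟩ := Ideal.mem_span_pair.1 h1
    refine ⟨a, b, ?_, ?_⟩ <;> rw [hab, ← Ideal.mem_span_singleton] <;>
      change _ ∈ Submodule.span E {g} <;> rw [← hg] <;> apply Ideal.subset_span <;> simp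
  constructor
  · intro v'
    obtain ⟨a, b, h1, h2⟩ := key (β v w) (β v' w)
    obtain ⟨a, rfl⟩ := hφ a
    obtain ⟨b, rfl⟩ := hφ b
    have e : β (a • v + (b • v' + 0)) w = φ a * β v w + φ b * β v' w := by
      have h0 : β 0 w = 0 := by simpa using hl 1 0 0 w
      rw [hl, hl, h0, add_zero]
    exact (hm (a • v + (b • v' + 0)) w (e ▸ h1)).trans (e ▸ h2)
  · intro w'
    obtain ⟨a, b, h1, h2⟩ := key (β v w) (β v w')
    obtain ⟨a, rfl⟩ := hφ a
    obtain ⟨b, rfl⟩ := hφ b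
    have e : β v (a • w + (b • w' + 0)) = φ a * β v w + φ b * β v w' := by
      have h0 : β v 0 = 0 := by simpa using hr 1 v 0 0
      rw [hr, hr, h0, add_zero]
    exact (hm v (a • w + (b • w' + 0)) (e ▸ h1)).trans (e ▸ h2)

theorem bilinear_one (φ : A →+* E) (hφ : Function.Surjective φ) (β : V → W → E)
    (hl : ∀ a v v' w, β (a • v + v') w = φ a * β v w + β v' w)
    (hr : ∀ a v w w', β v (a • w + w') = φ a * β v w + β v w')
    (ht : Ideal.span {d | ∃ v w, d = β v w} = ⊤) : ∃ v w, β v w = 1 := by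
  classical
  obtain ⟨I, ⟨v, w, rfl⟩, hI⟩ := set_has_maximal_iff_noetherian.2
    (inferInstance : IsNoetherian E E) {I : Ideal E | ∃ v w, I = Ideal.span {β v w}} ⟨_, 0, 0, rfl⟩
  have hm : ∀ v' w', β v' w' ∣ β v w → β v w ∣ β v' w' := by
    intro v' w' h
    by_contra hc
    exact hI _ ⟨v', w', rfl⟩ (lt_of_le_not_ge (Ideal.span_singleton_le_span_singleton.2 h)
      (fun h' => hc (Ideal.span_singleton_le_span_singleton.1 h')))
  have hall : ∀ v' w', β v w ∣ β v' w' := by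
    intro v' w'
    obtain ⟨h1, h2⟩ := bilinear_aux φ hφ β hl hr v w hm
    obtain ⟨t, ht⟩ := h1 v'
    obtain ⟨t, rfl⟩ := hφ t
    have e1 : β ((1 - t) • v + v') w = β v w := by rw [hl, ht]; simp; ring
    have e2 := (bilinear_aux φ hφ β hl hr ((1 - t) • v + v') w (by rw [e1]; exact hm)).2 w'
    rw [e1, hl] at e2
    exact (dvd_add_right ((h2 w').mul_left _)).1 e2
  have hu : β v w ∣ 1 := by
    rw [← Ideal.mem_span_singleton]
    have : (⊤ : Ideal E) ≤ Ideal.span {β v w} := by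
      rw [← ht, Ideal.span_le]
      rintro d ⟨v', w', rfl⟩
      exact Ideal.mem_span_singleton.2 (hall v' w')
    exact this trivial
  obtain ⟨c, hc⟩ := hu
  obtain ⟨c, rfl⟩ := hφ c
  refine ⟨c • v + 0, w, ?_⟩
  have h0 : β 0 w = 0 := by simpa using hl 1 0 0 w
  rw [hl, h0, hc]; ring
end Bil

section Ind
universe u v
variable {A : Type v} [CommRing A]
variable {P Q P' Q' : Type u} [AddCommGroup P] [Module A P] [AddCommGroup Q] [Module A Q]
variable [AddCommGroup P'] [Module A P'] [AddCommGroup Q'] [Module A Q']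

structure Hyp (F : P →ₗ[A] Q) (m : ℕ) (h : ℕ → A) : Prop where
  dP : DB A P
  dQ : DB A Q
  jP : ∀ k ≤ m, Jk (LinearMap.id : P →ₗ[A] P) k = ⊤
  jQ : ∀ k ≤ m, Jk (LinearMap.id : Q →ₗ[A] Q) k = ⊤
  jF : ∀ k ≤ m, Jk F k = Ideal.span {∏ i ∈ Finset.range k, h i}
  ch : ∀ i, h i ∣ h (i+1)

theorem Hyp.ch0 {F : P →ₗ[A] Q} {m : ℕ} {h : ℕ → A} (H : Hyp F m h) (i : ℕ) : h 0 ∣ h i := by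
  induction i with
  | zero => exact dvd_rfl
  | succ i ih => exact ih.trans (H.ch i)

/-- The splitting data attached to `χ (F x0) = 1`. -/
structure SplF (F : P →ₗ[A] Q) (χ : Q →ₗ[A] A) (x0 : P) (F' : P' →ₗ[A] Q')
  (iP : P' →ₗ[A] P) (rP : P →ₗ[A] P') (iQ : Q' →ₗ[A] Q) (rQ : Q →ₗ[A] Q') : Prop where
  sP : Spl iP rP (χ.comp F) x0
  sQ : Spl iQ rQ χ (F x0)
  hF : ∀ x, iQ (F' x) = F (iP x)

theorem exists_SplF (F : P →ₗ[A] Q) (χ : Q →ₗ[A] A) (x0 : P) (h1 : χ (F x0) = 1) :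
    ∃ (F' : LinearMap.ker (χ.comp F) →ₗ[A] LinearMap.ker χ) (rP : _) (rQ : _),
      SplF F χ x0 F' (LinearMap.ker (χ.comp F)).subtype rP (LinearMap.ker χ).subtype rQ := by
  obtain ⟨rP, hP⟩ := exists_Spl (χ.comp F) x0 h1
  obtain ⟨rQ, hQ⟩ := exists_Spl χ (F x0) h1
  refine ⟨F.restrict ?_, rP, rQ, hP, hQ, fun x => rfl⟩
  intro x hx
  exact hx

theorem SplF.hyp {F : P →ₗ[A] Q} {χ : Q →ₗ[A] A} {x0 : P} {F' : P' →ₗ[A] Q'}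
    {iP : P' →ₗ[A] P} {rP : P →ₗ[A] P'} {iQ : Q' →ₗ[A] Q} {rQ : Q →ₗ[A] Q'}
    (S : SplF F χ x0 F' iP rP iQ rQ) {m : ℕ} {h : ℕ → A} (H : Hyp F (m+1) h) (h0 : h 0 = 1) :
    Hyp F' m (fun i => h (i+1)) where
  dP := H.dP.spl S.sP
  dQ := H.dQ.spl S.sQ
  jP k hk := by
    rw [Jk_spl (F := LinearMap.id) (F' := LinearMap.id) (iP := iP) (iQ := iP) S.sP S.sP
      (fun x => rfl)]
    exact H.jP _ (by omega)
  jQ k hk := by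
    rw [Jk_spl (F := LinearMap.id) (F' := LinearMap.id) (iP := iQ) (iQ := iQ) S.sQ S.sQ
      (fun x => rfl)]
    exact H.jQ _ (by omega)
  jF k hk := by
    rw [Jk_spl S.sP S.sQ S.hF, H.jF _ (by omega), Finset.prod_range_succ', h0, mul_one]
  ch i := H.ch _

theorem Hyp.div [IsDomain A] {F : P →ₗ[A] Q} {m : ℕ} {h : ℕ → A} (H : Hyp F (m+1) h)
    (h0 : h 0 ≠ 0) : ∃ (G : P →ₗ[A] Q) (g : ℕ → A), F = h 0 • G ∧ (∀ i, h i = h 0 * g i) ∧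
      g 0 = 1 ∧ Hyp G (m+1) g := by
  have hd : ∀ (ψ : Q →ₗ[A] A) x, h 0 ∣ ψ (F x) := by
    intro ψ x
    have := Jk_one_mem F ψ x
    rw [H.jF 1 (by omega)] at this
    simpa [Ideal.mem_span_singleton] using this
  obtain ⟨G, hG⟩ := exists_div H.dQ F h0 hd
  choose g hg using H.ch0
  refine ⟨G, g, hG, hg, ?_, H.dP, H.dQ, H.jP, H.jQ, ?_, ?_⟩
  · have := hg 0
    apply mul_left_cancel₀ h0
    rw [← this, mul_one]
  · intro k hk
    have h1 := H.jF k hk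
    have hp : ∏ i ∈ Finset.range k, h i = (h 0) ^ k * ∏ i ∈ Finset.range k, g i := by
      rw [Finset.prod_congr rfl (fun i _ => hg i), Finset.prod_mul_distrib]
      simp
    rw [hG, Jk_smul_le, hp, ← Ideal.span_singleton_mul_span_singleton] at h1
    exact (Ideal.span_singleton_mul_right_inj (pow_ne_zero k h0)).1 h1
  · intro i
    have := H.ch i
    rw [hg i, hg (i+1)] at this
    exact (mul_dvd_mul_iff_left h0).1 this

theorem Hyp.zero {F : P →ₗ[A] Q} {m : ℕ} {h : ℕ → A} (H : Hyp F (m+1) h)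
    (h0 : h 0 = 0) : F = 0 ∧ (∀ i, h i = 0) ∧
    Hyp (LinearMap.id : P →ₗ[A] P) (m+1) (fun _ => (1:A)) ∧
    Hyp (LinearMap.id : Q →ₗ[A] Q) (m+1) (fun _ => (1:A)) := by
  refine ⟨?_, fun i => by simpa [h0] using H.ch0 i, ⟨H.dP, H.dP, H.jP, H.jP, ?_, by simp⟩,
    ⟨H.dQ, H.dQ, H.jQ, H.jQ, ?_, by simp⟩⟩
  · ext x
    obtain ⟨n, y, θ, hy⟩ := H.dQ
    rw [hy (F x)]
    refine Finset.sum_eq_zero fun j _ => ?_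
    have := Jk_one_mem F (θ j) x
    rw [H.jF 1 (by omega)] at this
    simp [h0] at this
    simp [this]
  · intro k hk; simp [H.jP k hk]
  · intro k hk; simp [H.jQ k hk]

theorem smith_ind [IsDomain A]
    (Side : ∀ (P Q : Type u) [AddCommGroup P] [Module A P] [AddCommGroup Q] [Module A Q],
      (P →ₗ[A] Q) → ℕ → (ℕ → A) → Prop)
    (S0 : ∀ (P Q : Type u) [AddCommGroup P] [Module A P] [AddCommGroup Q] [Module A Q]
      (F : P →ₗ[A] Q) h, Hyp F 0 h → Side P Q F 0 h → Ad F 0 h 1)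
    (Sid : ∀ (P Q : Type u) [AddCommGroup P] [Module A P] [AddCommGroup Q] [Module A Q]
      (F : P →ₗ[A] Q) m h, Side P Q F m h →
        Side P P LinearMap.id m (fun _ => 1) ∧ Side Q Q LinearMap.id m (fun _ => 1))
    (Sdiv : ∀ (P Q : Type u) [AddCommGroup P] [Module A P] [AddCommGroup Q] [Module A Q]
      (F G : P →ₗ[A] Q) m h g, DB A Q → h 0 ≠ 0 → F = h 0 • G → (∀ i, h i = h 0 * g i) →
        Side P Q F m h → Side P Q G m g)
    (Sstep : ∀ (P Q : Type u) [AddCommGroup P] [Module A P] [AddCommGroup Q] [Module A Q]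
      (F : P →ₗ[A] Q) m h, Hyp F (m+1) h → h 0 = 1 → Side P Q F (m+1) h →
      ∃ x0 χ, χ (F x0) = 1 ∧ ∀ (P' Q' : Type u) [AddCommGroup P'] [Module A P']
        [AddCommGroup Q'] [Module A Q'] (F' : P' →ₗ[A] Q')
        iP rP iQ rQ, SplF F χ x0 F' iP rP iQ rQ → Side P' Q' F' m (fun i => h (i+1)))
    (m : ℕ) : ∀ (P Q : Type u) [AddCommGroup P] [Module A P] [AddCommGroup Q] [Module A Q]
      (F : P →ₗ[A] Q) h, Hyp F m h → Side P Q F m h → Ad F m h 1 := by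
  induction m with
  | zero => exact S0
  | succ m ih =>
    have one : ∀ (P Q : Type u) [AddCommGroup P] [Module A P] [AddCommGroup Q] [Module A Q]
      (F : P →ₗ[A] Q) h, Hyp F (m+1) h → h 0 = 1 → Side P Q F (m+1) h → Ad F (m+1) h 1 := by
      intro P Q _ _ _ _ F h H h0 hS
      obtain ⟨x0, χ, h1, hn⟩ := Sstep P Q F m h H h0 hS
      obtain ⟨F', rP, rQ, S⟩ := exists_SplF F χ x0 h1
      exact Ad_join S.sP S.sQ S.hF h0 (ih _ _ F' _ (S.hyp H h0) (hn _ _ F' _ _ _ _ S))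
    intro P Q _ _ _ _ F h H hS
    by_cases h0 : h 0 = 0
    · obtain ⟨hF, hz, H1, H2⟩ := H.zero h0
      obtain ⟨S1, S2⟩ := Sid _ _ _ _ _ hS
      obtain ⟨p, π, q, κ, a1⟩ := one _ _ _ _ H1 rfl S1
      obtain ⟨p', π', q', κ', a2⟩ := one _ _ _ _ H2 rfl S2
      exact ⟨p, π, q', κ', a1.pp, a1.ps, a2.qq, a2.qs, fun i => by simp [hF, hz]⟩
    · obtain ⟨G, g, hG, hg, g0, HG⟩ := H.div h0
      obtain ⟨p, π, q, κ, a1⟩ := one _ _ G g HG g0 (Sdiv _ _ F G _ h g H.dQ h0 hG hg hS)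
      refine ⟨p, π, q, κ, a1.pp, a1.ps, a1.qq, a1.qs, fun i => ?_⟩
      rw [hG, LinearMap.smul_apply, a1.ff, hg i, mul_smul]

theorem eq_zero_of_Jk_one (hP : DB A P) (h : Jk (LinearMap.id : P →ₗ[A] P) 1 = ⊥) (x : P) :
    x = 0 := by
  obtain ⟨n, y, θ, hy⟩ := hP
  rw [hy x]
  refine Finset.sum_eq_zero fun j _ => ?_
  have := Jk_one_mem (LinearMap.id) (θ j) x
  rw [h] at this
  simp at this
  simp [this]

theorem Jk_one_eq (F : P →ₗ[A] Q) : Jk F 1 = Ideal.span {d | ∃ ψ : Q →ₗ[A] A, ∃ x, d = ψ (F x)} := by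
  unfold Jk
  congr 1
  refine Set.ext fun d => ⟨?_, ?_⟩
  · rintro ⟨ψ, e, rfl⟩; exact ⟨ψ 0, e 0, by simp⟩
  · rintro ⟨ψ, e, rfl⟩; exact ⟨fun _ => ψ, fun _ => e, by simp⟩

theorem smith_pid [IsDomain A] [IsPrincipalIdealRing A] (m : ℕ) (F : P →ₗ[A] Q) (h : ℕ → A)
    (H : Hyp F m h) (h1 : Jk (LinearMap.id : P →ₗ[A] P) (m+1) = ⊥)
    (h2 : Jk (LinearMap.id : Q →ₗ[A] Q) (m+1) = ⊥) : Ad F m h 1 := by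
  refine smith_ind (A := A) (fun P Q _ _ _ _ F m h => Jk (LinearMap.id : P →ₗ[A] P) (m+1) = ⊥ ∧
    Jk (LinearMap.id : Q →ₗ[A] Q) (m+1) = ⊥) ?_ ?_ ?_ ?_ m P Q F h H ⟨h1, h2⟩
  · intro P Q _ _ _ _ F h H S
    refine ⟨Fin.elim0, Fin.elim0, Fin.elim0, Fin.elim0, fun i => i.elim0, fun x => ?_,
      fun i => i.elim0, fun x => ?_, fun i => i.elim0⟩
    · rw [eq_zero_of_Jk_one H.dP S.1 x]; simp
    · rw [eq_zero_of_Jk_one H.dQ S.2 x]; simp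
  · intro P Q _ _ _ _ F m h S
    exact ⟨⟨S.1, S.1⟩, S.2, S.2⟩
  · intro P Q _ _ _ _ F G m h g _ _ _ _ S
    exact S
  · intro P Q _ _ _ _ F m h H h0 S
    have hJ := H.jF 1 (by omega)
    simp only [Finset.prod_range_one, h0, Ideal.span_singleton_one] at hJ
    rw [Jk_one_eq] at hJ
    obtain ⟨χ, x0, hx⟩ := bilinear_one (RingHom.id A) Function.surjective_id
      (fun (ψ : Q →ₗ[A] A) x => ψ (F x)) (by intros; simp) (by intros; simp) hJ
    refine ⟨x0, χ, hx, ?_⟩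
    intro P' Q' _ _ _ _ F' iP rP iQ rQ S'
    constructor
    · rw [Jk_spl (F := LinearMap.id) (F' := LinearMap.id) (iP := iP) (iQ := iP) S'.sP S'.sP
        (fun x => rfl)]
      exact S.1
    · rw [Jk_spl (F := LinearMap.id) (F' := LinearMap.id) (iP := iQ) (iQ := iQ) S'.sQ S'.sQ
        (fun x => rfl)]
      exact S.2
end Ind

end Part2

section Part3
section Crit
open Polynomial in
theorem crit {B : Type*} [CommRing B] [IsLocalRing B] (I : Ideal B[X]) (f g : B[X])
    (hf : f.Monic) (hfI : f ∈ I) (hgI : g ∈ I)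
    (hg : ∃ D : Ideal B, D ≠ ⊤ ∧ g - 1 ∈ D.map (Polynomial.C : B →+* B[X])) : I = ⊤ := by
  by_contra hI
  obtain ⟨M, hM, hIM⟩ := Ideal.exists_le_maximal I hI
  have h1 := Polynomial.Monic.quotient_isIntegral hf (hIM hfI)
  have : (⊥ : Ideal (B[X] ⧸ M)).IsMaximal := by
    let := Ideal.Quotient.field M
    exact Ideal.bot_isMaximal
  have h2 := Ideal.isMaximal_comap_of_isIntegral_of_isMaximal' _ h1 (⊥ : Ideal (B[X] ⧸ M))
  obtain ⟨D, hD, hgD⟩ := hg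
  have h3 := (IsLocalRing.eq_maximalIdeal h2) ▸ IsLocalRing.le_maximalIdeal hD
  have h4 : D.map (Polynomial.C : B →+* B[X]) ≤ M := by
    rw [Ideal.map_le_iff_le_comap]
    intro x hx
    have := h3 hx
    rw [Ideal.mem_comap] at this ⊢
    exact Ideal.Quotient.eq_zero_iff_mem.1 this
  apply hM.ne_top
  rw [Ideal.eq_top_iff_one]
  have := M.sub_mem (hIM hgI) (h4 hgD)
  simpa using this

theorem pic_lemma {E : Type*} [CommRing E] [IsDomain E] [UniqueFactorizationMonoid E] (s : E)
    (hs : s ≠ 0) : ∀ J J' : Ideal E, J * J' = Ideal.span {s} → ∃ a ∈ J, ∃ b ∈ J', a * b = s := by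
  refine UniqueFactorizationMonoid.induction_on_prime (P := fun s => s ≠ 0 → ∀ J J' : Ideal E,
    J * J' = Ideal.span {s} → ∃ a ∈ J, ∃ b ∈ J', a * b = s) s ?_ ?_ ?_ hs
  · intro h; exact absurd rfl h
  · intro x hx _ J J' h
    rw [Ideal.span_singleton_eq_top.2 hx] at h
    have h1 : J = ⊤ := by
      rw [eq_top_iff, ← h]; exact Ideal.mul_le_left
    have h2 : J' = ⊤ := by
      rw [eq_top_iff, ← h]; exact Ideal.mul_le_right
    exact ⟨x, by simp [h1], 1, by simp [h2], mul_one x⟩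
  · intro s p hs0 hp ih _ J J' h
    have hle : J * J' ≤ Ideal.span {p} := by
      rw [h, Ideal.span_singleton_le_span_singleton]; exact dvd_mul_right _ _
    have hpp : (Ideal.span {p}).IsPrime := (Ideal.span_singleton_prime hp.ne_zero).2 hp
    have aux : ∀ J : Ideal E, J ≤ Ideal.span {p} → ∃ J1 : Ideal E, J = Ideal.span {p} * J1 := by
      intro J hJ
      refine ⟨Submodule.comap (LinearMap.lsmul E E p) J, le_antisymm ?_ ?_⟩
      · intro x hx
        obtain ⟨y, rfl⟩ := Ideal.mem_span_singleton.1 (hJ hx)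
        exact Ideal.mul_mem_mul (Ideal.mem_span_singleton_self p) hx
      · rw [Ideal.span_singleton_mul_le_iff]
        intro z hz
        exact hz
    rcases hpp.mul_le.1 hle with h1 | h1
    · obtain ⟨J1, rfl⟩ := aux J h1
      rw [mul_assoc, ← Ideal.span_singleton_mul_span_singleton,
        Ideal.span_singleton_mul_right_inj hp.ne_zero] at h
      obtain ⟨a, ha, b, hb, hab⟩ := ih hs0 _ _ h
      exact ⟨p * a, Ideal.mul_mem_mul (Ideal.mem_span_singleton_self p) ha, b, hb, by
        rw [mul_assoc, hab]⟩
    · obtain ⟨J1, rfl⟩ := aux J' h1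
      rw [mul_left_comm, ← Ideal.span_singleton_mul_span_singleton,
        Ideal.span_singleton_mul_right_inj hp.ne_zero] at h
      obtain ⟨a, ha, b, hb, hab⟩ := ih hs0 _ _ h
      exact ⟨a, ha, p * b, Ideal.mul_mem_mul (Ideal.mem_span_singleton_self p) hb, by
        rw [mul_left_comm, hab]⟩
end Crit

section Local
open Polynomial
universe u v
variable {B : Type v} [CommRing B] [IsDomain B]
variable {P Q : Type u} [AddCommGroup P] [Module B[X] P] [AddCommGroup Q] [Module B[X] Q]

def StepOut (F : P →ₗ[B[X]] Q) (m : ℕ) (h : ℕ → B[X]) : Prop :=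
  ∃ (x0 : P) (χ : Q →ₗ[B[X]] B[X]) (s : B[X]) (p : _) (π : _) (q : _) (κ : _), χ (F x0) = 1 ∧ s.Monic ∧ IsAd F (m+1) h s p π q κ ∧ (π 0 x0).Monic

theorem monic_shift (s f : B[X]) (hs : s.Monic) (N : ℕ) (hN : f.natDegree < N) :
    (Polynomial.X ^ N * s + f).Monic := by
  have h1 : (Polynomial.X ^ N * s).Monic := (monic_X_pow N).mul hs
  apply h1.add_of_left
  rw [Polynomial.degree_mul, degree_X_pow]
  calc f.degree ≤ f.natDegree := degree_le_natDegree
    _ < (N : WithBot ℕ) := by exact_mod_cast hN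
    _ ≤ N + s.degree := by
      rw [degree_eq_natDegree hs.ne_zero]
      exact_mod_cast Nat.le_add_right _ _

/-- the key consequence of the unimodularity criterion -/
theorem crit_step [IsLocalRing B] {F : P →ₗ[B[X]] Q} {m : ℕ} {h : ℕ → B[X]} (h0 : h 0 = 1)
    {s : B[X]} (hs : s.Monic) {p : Fin (m+1) → P} {π : Fin (m+1) → P →ₗ[B[X]] B[X]}
    {q : Fin (m+1) → Q} {κ : Fin (m+1) → Q →ₗ[B[X]] B[X]} (H : IsAd F (m+1) h s p π q κ)
    (x0 : P) (hx : (π 0 x0).Monic) (ψ : Q →ₗ[B[X]] B[X])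
    (hg : ∃ D : Ideal B, D ≠ ⊤ ∧ ψ (F x0) - 1 ∈ D.map (Polynomial.C : B →+* B[X])) :
    StepOut F m h := by
  have hk : κ 0 (F x0) = π 0 x0 := by simpa [h0] using H.kap hs.ne_zero 0 x0
  have := crit (LinearMap.range (LinearMap.applyₗ (R := B[X]) (M₂ := B[X]) (F x0))) (π 0 x0)
    (ψ (F x0)) hx ⟨κ 0, hk⟩ ⟨ψ, rfl⟩ hg
  have h1 : (1 : B[X]) ∈ LinearMap.range (LinearMap.applyₗ (R := B[X]) (M₂ := B[X]) (F x0)) := by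
    rw [this]; trivial
  obtain ⟨χ, hχ⟩ := h1
  exact ⟨x0, χ, s, p, π, q, κ, hχ, hs, H, hx⟩

theorem pic_step {D : Type*} [CommRing D] [IsDomain D] [UniqueFactorizationMonoid D]
    (g : B →+* D) (hgs : Function.Surjective g)
    {F : P →ₗ[B[X]] Q} {m : ℕ} {h : ℕ → B[X]} (h0 : h 0 = 1)
    {s : B[X]} (hs : s.Monic) {p : Fin (m+1) → P} {π : Fin (m+1) → P →ₗ[B[X]] B[X]}
    {q : Fin (m+1) → Q} {κ : Fin (m+1) → Q →ₗ[B[X]] B[X]} (H : IsAd F (m+1) h s p π q κ)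
    (hJ : Jk F 1 = ⊤) (hz : ∀ i : Fin m, (h (i+1)).map g = 0) :
    ∃ (e : P) (ψ : Q →ₗ[B[X]] B[X]), ((π 0 e).map g).Monic ∧ (ψ (F e)).map g = 1 := by
  set φ := mapRingHom g with hφ
  have hφs : Function.Surjective φ := Polynomial.map_surjective g hgs
  have key : ∀ (ψ : Q →ₗ[B[X]] B[X]) x, φ s * φ (ψ (F x)) = φ (π 0 x) * φ (ψ (q 0)) := by
    intro ψ x
    have : s * ψ (F x) = ψ (F (s • x)) := by simp
    rw [← map_mul, this, H.ps, Fin.sum_univ_succ]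
    have hz' : ∀ i : Fin m, φ (h (i+1)) = 0 := hz
    simp [H.ff, h0, hz']
  have hs0 : φ s ≠ 0 := (hs.map g).ne_zero
  set J := Ideal.map φ (LinearMap.range (π 0)) with hJd
  set J' := Ideal.map φ (LinearMap.range (LinearMap.applyₗ (R := B[X]) (M₂ := B[X]) (q 0))) with hJd'
  have hJJ : J * J' = Ideal.span {φ s} := by
    apply le_antisymm
    · rw [Ideal.mul_le]
      intro r hr t ht
      obtain ⟨_, ⟨x, rfl⟩, rfl⟩ := (Ideal.mem_map_iff_of_surjective φ hφs).1 hr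
      obtain ⟨_, ⟨ψ, rfl⟩, rfl⟩ := (Ideal.mem_map_iff_of_surjective φ hφs).1 ht
      rw [Ideal.mem_span_singleton]
      exact ⟨_, (key ψ x).symm⟩
    · rw [Ideal.span_singleton_le_iff_mem]
      have h1 : (1 : B[X]) ∈ Jk F 1 := by rw [hJ]; trivial
      have h3 : ∀ y ∈ Jk F 1, φ s * φ y ∈ J * J' := by
        intro y hy
        rw [Jk_one_eq] at hy
        refine Submodule.span_induction ?_ ?_ ?_ ?_ hy
        · rintro _ ⟨ψ, x, rfl⟩
          rw [key]
          exact Ideal.mul_mem_mul (Ideal.mem_map_of_mem _ ⟨x, rfl⟩)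
            (Ideal.mem_map_of_mem _ ⟨ψ, rfl⟩)
        · simp
        · intro x y _ _ hx hy
          rw [map_add, mul_add]; exact Ideal.add_mem _ hx hy
        · intro a x _ hx
          rw [smul_eq_mul, map_mul, mul_left_comm]; exact Ideal.mul_mem_left _ _ hx
      simpa using h3 1 h1
  obtain ⟨a, ha, b, hb, hab⟩ := pic_lemma (φ s) hs0 J J' hJJ
  obtain ⟨_, ⟨e, rfl⟩, rfl⟩ := (Ideal.mem_map_iff_of_surjective φ hφs).1 ha
  obtain ⟨_, ⟨ψ, rfl⟩, rfl⟩ := (Ideal.mem_map_iff_of_surjective φ hφs).1 hb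
  have h1 : φ (ψ (F e)) = 1 := by
    apply mul_left_cancel₀ hs0
    rw [key, mul_one]; exact hab
  have hlc : (φ (π 0 e)).leadingCoeff * (φ (ψ (q 0))).leadingCoeff = 1 := by
    rw [← leadingCoeff_mul]
    have : (φ (π 0 e) * φ (ψ (q 0))) = φ s := hab
    rw [this]; exact (hs.map g)
  obtain ⟨c, hc⟩ := hgs (φ (ψ (q 0))).leadingCoeff
  obtain ⟨c', hc'⟩ := hgs (φ (π 0 e)).leadingCoeff
  refine ⟨(Polynomial.C c) • e, (Polynomial.C c') • ψ, ?_, ?_⟩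
  · have : (π 0 (Polynomial.C c • e)).map g = Polynomial.C (g c) * φ (π 0 e) := by
      simp [hφ]
    rw [this, hc]
    unfold Monic
    rw [leadingCoeff_mul, leadingCoeff_C, mul_comm]; exact hlc
  · have : ((Polynomial.C c' • ψ) (F (Polynomial.C c • e))).map g
        = Polynomial.C (g c') * Polynomial.C (g c) * φ (ψ (F e)) := by
      simp [hφ]; ring
    rw [this, hc, hc', h1, mul_one, ← Polynomial.C_mul, hlc, Polynomial.C_1]

theorem step1 [UniqueFactorizationMonoid B]
    {F : P →ₗ[B[X]] Q} {m : ℕ} {h : ℕ → B[X]} (h0 : h 0 = 1)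
    {s : B[X]} (hs : s.Monic) {p : Fin (m+1) → P} {π : Fin (m+1) → P →ₗ[B[X]] B[X]}
    {q : Fin (m+1) → Q} {κ : Fin (m+1) → Q →ₗ[B[X]] B[X]} (H : IsAd F (m+1) h s p π q κ)
    (hJ : Jk F 1 = ⊤) (hz : ∀ i : Fin m, h (i+1) = 0) : StepOut F m h := by
  obtain ⟨e, ψ, h1, h2⟩ := pic_step (RingHom.id B) Function.surjective_id h0 hs H hJ
    (fun i => by simp [hz])
  simp only [Polynomial.map_id] at h1 h2
  exact ⟨e, ψ, s, p, π, q, κ, h2, hs, H, h1⟩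

theorem step2 [IsLocalRing B]
    {F : P →ₗ[B[X]] Q} {m : ℕ} {h : ℕ → B[X]} (h0 : h 0 = 1)
    {s : B[X]} (hs : s.Monic) {p : Fin (m+2) → P} {π : Fin (m+2) → P →ₗ[B[X]] B[X]}
    {q : Fin (m+2) → Q} {κ : Fin (m+2) → Q →ₗ[B[X]] B[X]} (H : IsAd F (m+2) h s p π q κ)
    (hJ : Jk F 1 = ⊤) (t : B) (ht : Prime t) [UniqueFactorizationMonoid (B ⧸ Ideal.span {t})]
    (hz : ∀ i : ℕ, Polynomial.C t ∣ h (i+1)) (k : ℕ) (hk : h 1 ∣ Polynomial.C (t ^ k)) :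
    StepOut F (m+1) h := by
  have hpp : (Ideal.span {t}).IsPrime := (Ideal.span_singleton_prime ht.ne_zero).2 ht
  have hker : ∀ f : B[X], f.map (Ideal.Quotient.mk (Ideal.span {t})) = 0 → Polynomial.C t ∣ f := by
    intro f hf
    rw [Polynomial.C_dvd_iff_dvd_coeff]
    intro i
    have := congrArg (fun f => f.coeff i) hf
    simp only [Polynomial.coeff_map, Polynomial.coeff_zero] at this
    rwa [Ideal.Quotient.eq_zero_iff_mem, Ideal.mem_span_singleton] at this
  have hker' : ∀ f : B[X], Polynomial.C t ∣ f → f.map (Ideal.Quotient.mk (Ideal.span {t})) = 0 := by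
    rintro _ ⟨f, rfl⟩
    have : Ideal.Quotient.mk (Ideal.span {t}) t = 0 := by
      rw [Ideal.Quotient.eq_zero_iff_mem]; exact Ideal.mem_span_singleton_self t
    simp [this]
  obtain ⟨e, ψ, h1, h2⟩ := pic_step (Ideal.Quotient.mk (Ideal.span {t}))
    Ideal.Quotient.mk_surjective h0 hs H hJ (fun i => hker' _ (hz i))
  obtain ⟨σ, hσ1, -, hσ⟩ := lifts_and_degree_eq_and_monic
    (show (π 0 e).map (Ideal.Quotient.mk (Ideal.span {t})) ∈ lifts (Ideal.Quotient.mk (Ideal.span {t}))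
      from ⟨π 0 e, rfl⟩) h1
  obtain ⟨j, hj⟩ := hker (π 0 e - σ) (by rw [Polynomial.map_sub, hσ1, sub_self])
  set N := (π 1 e).natDegree + 1 with hN
  set x0 := e + (Polynomial.X ^ N : B[X]) • p 1 with hx0
  set M := Polynomial.X ^ N * s + π 1 e with hM
  have hMm : M.Monic := monic_shift _ _ hs N (by omega)
  have e0 : π 0 x0 = π 0 e := by simp [hx0, H.pp]
  have e1 : π 1 x0 = M := by simp [hx0, H.pp, hM]; ring
  obtain ⟨c, hc⟩ := hk
  obtain ⟨b, hb⟩ : (π 0 e) ∣ (π 0 e - Polynomial.C t * j) ^ k - (-(Polynomial.C t * j)) ^ k := by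
    have := sub_dvd_pow_sub_pow (π 0 e - Polynomial.C t * j) (-(Polynomial.C t * j)) k
    simpa using this
  have hσ' : π 0 e - Polynomial.C t * j = σ := by rw [← hj]; ring
  have hμ : σ ^ k * M = (b * M) * π 0 e + ((-j) ^ k * c) * (h 1 * M) := by
    have : (-(Polynomial.C t * j)) ^ k = (-j) ^ k * c * h 1 := by
      rw [mul_assoc, mul_comm c, ← hc, Polynomial.C_pow, ← mul_pow]; ring
    rw [hσ', this] at hb
    linear_combination M * hb
  obtain ⟨p', π', q', κ', H', hπ⟩ := H.change h0 (π 0 e) M (b * M) ((-j) ^ k * c) _ hμ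
  have hμm : (σ ^ k * M).Monic := (hσ.pow k).mul hMm
  have hπx : π' 0 x0 = σ ^ k * M := by
    rw [hπ, hμ]; simp [e0, e1]; ring
  refine crit_step h0 (hs.mul hμm) H' x0 (by rw [hπx]; exact hμm) ψ
    ⟨Ideal.span {t}, hpp.ne_top, ?_⟩
  rw [Ideal.map_span, Set.image_singleton, Ideal.mem_span_singleton]
  apply hker
  obtain ⟨d, hd⟩ := hz 0
  have ff1 := H.ff 1
  simp only [Fin.val_one] at ff1
  rw [Polynomial.map_sub, hx0, map_add, map_smul, ff1, map_add, Polynomial.map_add, h2]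
  have : (ψ ((Polynomial.X ^ N : B[X]) • h 1 • q 1)).map (Ideal.Quotient.mk (Ideal.span {t})) = 0 := by
    apply hker'
    simp only [map_smul, smul_eq_mul]
    exact ((hz 0).mul_right _).mul_left _
  rw [this]; simp

theorem bez {E : Type*} [CommRing E] [IsDomain E] [IsPrincipalIdealRing E] (x y : E) :
    ∃ a b r s : E, r * a + s * b = 1 ∧ b * x = a * y := by
  obtain ⟨g, hg⟩ := (IsPrincipalIdealRing.principal (Ideal.span {x, y})).principal
  by_cases hg0 : g = 0
  · have hx : x ∈ Ideal.span {x, y} := Ideal.subset_span (by simp)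
    have hy : y ∈ Ideal.span {x, y} := Ideal.subset_span (by simp)
    rw [hg] at hx hy
    simp [hg0] at hx hy
    exact ⟨1, 0, 1, 0, by simp, by simp [hx, hy]⟩
  · have h1 : g ∈ Ideal.span {x, y} := by rw [hg]; exact Submodule.mem_span_singleton_self g
    obtain ⟨r, s, hrs⟩ := Ideal.mem_span_pair.1 h1
    have hx : x ∈ Ideal.span {x, y} := Ideal.subset_span (by simp)
    have hy : y ∈ Ideal.span {x, y} := Ideal.subset_span (by simp)
    rw [hg] at hx hy
    obtain ⟨a, rfl⟩ := Ideal.mem_span_singleton.1 hx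
    obtain ⟨b, rfl⟩ := Ideal.mem_span_singleton.1 hy
    refine ⟨a, b, r, s, ?_, by ring⟩
    apply mul_left_cancel₀ hg0
    linear_combination hrs

theorem step3 [IsLocalRing B]
    {F : P →ₗ[B[X]] Q} {m : ℕ} {h : ℕ → B[X]} (h0 : h 0 = 1)
    {s : B[X]} (hs : s.Monic) {p : Fin (m+2) → P} {π : Fin (m+2) → P →ₗ[B[X]] B[X]}
    {q : Fin (m+2) → Q} {κ : Fin (m+2) → Q →ₗ[B[X]] B[X]} (H : IsAd F (m+2) h s p π q κ)
    (hJ : Jk F 2 = ⊤) : StepOut F (m+1) h := by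
  set φ := mapRingHom (IsLocalRing.residue B) with hφ
  have hφs : Function.Surjective φ := Polynomial.map_surjective _ IsLocalRing.residue_surjective
  set v := F (p 0) with hv
  let V : Submodule B[X] (Q →ₗ[B[X]] B[X]) :=
    { carrier := {ψ | φ (ψ v) = 0}
      add_mem' := by
        intro a b ha hb
        simp only [Set.mem_ofPred_eq] at *
        rw [LinearMap.add_apply, map_add, ha, hb, add_zero]
      zero_mem' := by simp
      smul_mem' := by
        intro c a ha
        simp only [Set.mem_ofPred_eq] at *
        rw [LinearMap.smul_apply, smul_eq_mul, map_mul, ha, mul_zero] }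
  have hspan : Ideal.span {d | ∃ (ψ : V) (y : P), d = φ (ψ.1 (F y))} = ⊤ := by
    rw [eq_top_iff, ← Ideal.map_top φ, ← hJ]
    unfold Jk
    rw [Ideal.map_span, Ideal.span_le]
    rintro _ ⟨_, ⟨ψ, e, rfl⟩, rfl⟩
    obtain ⟨a, b, r, t, hrt, hab⟩ := bez (φ (ψ 0 v)) (φ (ψ 1 v))
    obtain ⟨a, rfl⟩ := hφs a
    obtain ⟨b, rfl⟩ := hφs b
    have hm : b • ψ 0 - a • ψ 1 ∈ V := by
      change φ ((b • ψ 0 - a • ψ 1) v) = 0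
      simp only [LinearMap.sub_apply, LinearMap.smul_apply, smul_eq_mul, map_sub, map_mul]
      rw [hab, sub_self]
    have hin : ∀ y, φ (b) * φ (ψ 0 (F y)) - φ a * φ (ψ 1 (F y)) ∈
        Ideal.span {d | ∃ (ψ : V) (y : P), d = φ (ψ.1 (F y))} := by
      intro y
      refine Ideal.subset_span ⟨⟨_, hm⟩, y, ?_⟩
      simp
    have : φ (Matrix.of fun i j => (ψ i) (F (e j))).det =
      (r * φ (ψ 0 (F (e 1))) + t * φ (ψ 1 (F (e 1)))) *
        (φ (b) * φ (ψ 0 (F (e 0))) - φ a * φ (ψ 1 (F (e 0)))) -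
      (r * φ (ψ 0 (F (e 0))) + t * φ (ψ 1 (F (e 0)))) *
        (φ (b) * φ (ψ 0 (F (e 1))) - φ a * φ (ψ 1 (F (e 1)))) := by
      rw [Matrix.det_fin_two]
      simp only [Matrix.of_apply, map_sub, map_mul]
      linear_combination (-(φ (ψ 0 (F (e 0))) * φ (ψ 1 (F (e 1)))) + φ (ψ 0 (F (e 1))) * φ (ψ 1 (F (e 0)))) * hrt
    rw [SetLike.mem_coe, this]
    exact Ideal.sub_mem _ (Ideal.mul_mem_left _ _ (hin _)) (Ideal.mul_mem_left _ _ (hin _))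
  obtain ⟨ψ, y, hy⟩ := bilinear_one φ hφs (fun (ψ : V) y => φ (ψ.1 (F y))) (by intros; simp)
    (by intros; simp) hspan
  set x0 := (Polynomial.X ^ ((π 0 y).natDegree + 1) : B[X]) • p 0 + y with hx0
  have e0 : π 0 x0 = Polynomial.X ^ ((π 0 y).natDegree + 1) * s + π 0 y := by simp [hx0, H.pp]
  refine crit_step h0 hs H x0 (by rw [e0]; exact monic_shift _ _ hs _ (by omega)) ψ.1
    ⟨IsLocalRing.maximalIdeal B, Ideal.IsPrime.ne_top', ?_⟩
  rw [Ideal.mem_map_C_iff]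
  intro n
  rw [← Ideal.Quotient.eq_zero_iff_mem]
  change IsLocalRing.residue B _ = 0
  rw [← Polynomial.coeff_map]
  change (φ (ψ.1 (F x0) - 1)).coeff n = 0
  have : φ (ψ.1 v) = 0 := ψ.2
  rw [map_sub, hx0, map_add, map_smul, map_add, map_smul, smul_eq_mul, map_add, map_mul, this]
  have hy' : φ (ψ.1 (F y)) = 1 := hy
  rw [hy']; simp
end Local

end Part3

section Part4
section LocalThm
open Polynomial
universe u v
variable {B : Type v} [CommRing B] [IsDomain B]

theorem C_dvd_C' {a b : B} : (Polynomial.C a ∣ Polynomial.C b) ↔ a ∣ b := by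
  constructor
  · intro h
    have := (Polynomial.C_dvd_iff_dvd_coeff a (Polynomial.C b)).1 h 0
    simpa using this
  · exact map_dvd _

/-- Admissible diagonal entries over the local ring `B`. -/
def OKEntry (b : B) : Prop :=
  b = 0 ∨ IsUnit b ∨ ∃ t : B, Prime t ∧ UniqueFactorizationMonoid (B ⧸ Ideal.span {t}) ∧
    ∃ a : ℕ, b ∣ t ^ a

theorem smith_local [IsLocalRing B] [UniqueFactorizationMonoid B] (m : ℕ) {P Q : Type u}
    [AddCommGroup P] [Module B[X] P] [AddCommGroup Q] [Module B[X] Q]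
    (F : P →ₗ[B[X]] Q) (hb : ℕ → B) (hok : ∀ i, OKEntry (hb i))
    (H : Hyp F m (fun i => Polynomial.C (hb i))) (s : B[X]) (hs : s.Monic)
    (hA : Ad F m (fun i => Polynomial.C (hb i)) s) :
    Ad F m (fun i => Polynomial.C (hb i)) 1 := by
  refine smith_ind (A := B[X]) (fun P Q _ _ _ _ F m h => (∃ hb : ℕ → B,
    (h = fun i => Polynomial.C (hb i)) ∧ (∀ i, OKEntry (hb i))) ∧
    ∃ s : B[X], s.Monic ∧ Ad F m h s) ?_ ?_ ?_ ?_ m P Q F _ H ⟨⟨hb, rfl, hok⟩, s, hs, hA⟩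
  · rintro P Q _ _ _ _ F h H ⟨-, s, hs, p, π, q, κ, hA⟩
    refine ⟨p, π, q, κ, fun i => i.elim0, fun x => ?_,
      fun i => i.elim0, fun x => ?_, fun i => i.elim0⟩
    · have := hA.ps x
      simp at this
      simpa using H.dP.tf hs.ne_zero this
    · have := hA.qs x
      simp at this
      simpa using H.dQ.tf hs.ne_zero this
  · rintro P Q _ _ _ _ F m h ⟨-, s, hs, p, π, q, κ, hA⟩
    refine ⟨⟨⟨fun _ => 1, by simp, fun i => Or.inr (Or.inl isUnit_one)⟩, s, hs, p, π, p, π, hA.pp,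
      hA.ps, hA.pp, hA.ps, by simp⟩, ⟨⟨fun _ => 1, by simp, fun i => Or.inr (Or.inl isUnit_one)⟩,
      s, hs, q, κ, q, κ, hA.qq, hA.qs, hA.qq, hA.qs, by simp⟩⟩
  · rintro P Q _ _ _ _ F G m h g dQ h0 hFG hg ⟨⟨hb, rfl, hok⟩, s, hs, p, π, q, κ, hA⟩
    have h0 : Polynomial.C (hb 0) ≠ 0 := h0
    have hFG : F = Polynomial.C (hb 0) • G := hFG
    have hg : ∀ i, Polynomial.C (hb i) = Polynomial.C (hb 0) * g i := hg
    have hb0 : hb 0 ≠ 0 := fun h => h0 (by simp [h])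
    have : ∀ i, ∃ gb : B, g i = Polynomial.C gb ∧ OKEntry gb := by
      intro i
      have h1 := hg i
      have h2 : hb 0 ∣ hb i := C_dvd_C'.1 ⟨_, h1⟩
      obtain ⟨c, hc⟩ := h2
      refine ⟨c, ?_, ?_⟩
      · apply mul_left_cancel₀ h0
        rw [← h1, hc, Polynomial.C_mul]
      · rcases hok i with h | h | ⟨t, ht, ht2, a, h⟩
        · left
          rw [hc] at h
          exact (mul_eq_zero.1 h).resolve_left hb0
        · right; left
          rw [hc] at h
          exact isUnit_of_mul_isUnit_right h
        · right; right
          exact ⟨t, ht, ht2, a, (Dvd.intro_left _ hc.symm).trans h⟩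
    choose gb hgb hgok using this
    refine ⟨⟨gb, funext hgb, hgok⟩, s, hs, p, π, q, κ, hA.pp, hA.ps, hA.qq, hA.qs, fun i => ?_⟩
    apply dQ.tf' h0
    have := hA.ff i
    rw [hFG, LinearMap.smul_apply, hg i, mul_smul] at this
    exact this
  · rintro P Q _ _ _ _ F m h H h0 ⟨⟨hb, rfl, hok⟩, s, hs, p, π, q, κ, hA⟩
    have h0' : Polynomial.C (hb 0) = 1 := h0
    have hst : StepOut F m (fun i => Polynomial.C (hb i)) := by
      have hJ1 := H.jF 1 (by omega)
      simp only [Finset.prod_range_one, h0, Ideal.span_singleton_one] at hJ1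
      have hch : ∀ i, Polynomial.C (hb 1) ∣ Polynomial.C (hb (i + 1)) := by
        intro i
        induction i with
        | zero => exact dvd_rfl
        | succ i ih => exact ih.trans (H.ch (i+1))
      rcases m with _ | m
      · exact step1 h0 hs hA hJ1 (fun i => i.elim0)
      · by_cases hu : IsUnit (hb 1)
        · have hJ2 := H.jF 2 (by omega)
          rw [Finset.prod_range_succ, Finset.prod_range_one, h0', one_mul,
            Ideal.span_singleton_eq_top.2 (hu.map Polynomial.C)] at hJ2
          exact step3 h0 hs hA hJ2
        · rcases hok 1 with h | h | ⟨t, ht, ht2, a, h⟩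
          · refine step1 h0 hs hA hJ1 (fun i => ?_)
            have := hch i
            rw [h] at this
            simpa using this
          · exact absurd h hu
          · have htd : t ∣ hb 1 := by
              obtain ⟨i, hi, hass⟩ := (dvd_prime_pow ht a).1 h
              have : i ≠ 0 := by
                rintro rfl
                rw [pow_zero, associated_one_iff_isUnit] at hass
                exact hu hass
              exact (dvd_pow_self t this).trans hass.symm.dvd
            exact step2 h0 hs hA hJ1 t ht (fun i => (C_dvd_C'.2 htd).trans (hch i)) a
              (C_dvd_C'.2 h)
    obtain ⟨x0, χ, s, p, π, q, κ, h1, hs, hA, hm⟩ := hst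
    refine ⟨x0, χ, h1, ?_⟩
    intro P' Q' _ _ _ _ F' iP rP iQ rQ S
    refine ⟨⟨fun i => hb (i+1), rfl, fun i => hok (i+1)⟩, _, hm.mul hs, ?_⟩
    exact Ad_spl S.sP S.sQ S.hF (h := fun i => Polynomial.C (hb i)) h0 hs.ne_zero hA
end LocalThm

end Part4

section Part5
section Mat
universe v
variable {A : Type v} [CommRing A] {m : ℕ}

theorem det_mul_mem {k : ℕ} (I : Ideal A) (N : Matrix (Fin m) (Fin k) A)
    (hN : ∀ r : Fin k ↪ Fin m, (N.submatrix r id).det ∈ I) (Ψ : Matrix (Fin k) (Fin m) A) :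
    (Ψ * N).det ∈ I := by
  classical
  have h1 : (Ψ * N).det = ∑ r : Fin k → Fin m, (∏ i, Ψ i (r i)) * (N.submatrix r id).det := by
    have e1 : (Ψ * N) = Matrix.of fun i => ∑ j, Ψ i j • N j := by
      ext i c
      simp [Matrix.mul_apply, Finset.sum_apply]
    have e2 : (Ψ * N).det = (Matrix.detRowAlternating (R := A) (n := Fin k)).toMultilinearMap
        (fun i => ∑ j, Ψ i j • N j) := by
      rw [e1]; rfl
    rw [e2, MultilinearMap.map_sum]
    refine Finset.sum_congr rfl fun r _ => ?_
    rw [MultilinearMap.map_smul_univ, smul_eq_mul]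
    rfl
  rw [h1]
  refine Ideal.sum_mem _ fun r _ => Ideal.mul_mem_left _ _ ?_
  by_cases hr : Function.Injective r
  · exact hN ⟨r, hr⟩
  · rw [Function.not_injective_iff] at hr
    obtain ⟨a, b, hab, hne⟩ := hr
    rw [Matrix.det_zero_of_row_eq hne]
    · exact I.zero_mem
    · funext c; simp [hab]

theorem det_mul_mul_mem {k : ℕ} (F : Matrix (Fin m) (Fin m) A) (Ψ : Matrix (Fin k) (Fin m) A)
    (E : Matrix (Fin m) (Fin k) A) : (Ψ * F * E).det ∈ Ideal.span (minorsSet F k) := by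
  rw [Matrix.mul_assoc]
  apply det_mul_mem
  intro r
  have : ((F * E).submatrix r id) = ((Eᵀ) * (F.submatrix r id)ᵀ)ᵀ := by
    rw [← Matrix.transpose_mul, Matrix.transpose_transpose]
    ext i j; simp [Matrix.mul_apply]
  rw [this, Matrix.det_transpose]
  apply det_mul_mem
  intro c
  refine Ideal.subset_span ⟨r, c, ?_⟩
  rw [← Matrix.det_transpose]
  rfl

theorem minors_mul_le {k : ℕ} (U F W : Matrix (Fin m) (Fin m) A) :
    Ideal.span (minorsSet (U * F * W) k) ≤ Ideal.span (minorsSet F k) := by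
  rw [Ideal.span_le]
  rintro _ ⟨r, c, rfl⟩
  have : (U * F * W).submatrix r c = U.submatrix r id * F * W.submatrix id c := by
    ext i j; simp [Matrix.mul_apply]
  rw [this]
  exact det_mul_mul_mem _ _ _

theorem Jk_mulVec {k : ℕ} (F : Matrix (Fin m) (Fin m) A) :
    Jk F.mulVecLin k = Ideal.span (minorsSet F k) := by
  apply le_antisymm
  · unfold Jk
    rw [Ideal.span_le]
    rintro _ ⟨ψ, e, rfl⟩
    have : (Matrix.of fun i j => (ψ i) (F.mulVecLin (e j))) =
        (Matrix.of fun i j => ψ i (Pi.single j 1)) * F * (Matrix.of fun i j => e j i) := by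
      ext i j
      rw [Matrix.mul_assoc, Matrix.mul_apply]
      simp only [Matrix.of_apply]
      rw [LinearMap.pi_apply_eq_sum_univ (ψ i)]
      refine Finset.sum_congr rfl fun x _ => ?_
      rw [smul_eq_mul, mul_comm]
      congr 2
      · congr 1; ext y; simp [Pi.single_apply, eq_comm]
    rw [this]
    exact det_mul_mul_mem _ _ _
  · rw [Ideal.span_le]
    rintro _ ⟨r, c, rfl⟩
    refine Ideal.subset_span ⟨fun i => LinearMap.proj (r i), fun j => Pi.single (c j) 1, ?_⟩
    congr 1
    ext i j
    simp

theorem mulVecLin_id : (LinearMap.id : (Fin m → A) →ₗ[A] _) = (1 : Matrix (Fin m) (Fin m) A).mulVecLin := by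
  ext; simp

theorem Jk_id {k : ℕ} (hk : k ≤ m) : Jk (LinearMap.id : (Fin m → A) →ₗ[A] (Fin m → A)) k = ⊤ := by
  rw [mulVecLin_id, Jk_mulVec, Ideal.eq_top_iff_one]
  refine Ideal.subset_span ⟨Fin.castLEEmb hk, Fin.castLEEmb hk, ?_⟩
  rw [Matrix.submatrix_one_embedding, Matrix.det_one]

theorem Jk_id' : Jk (LinearMap.id : (Fin m → A) →ₗ[A] (Fin m → A)) (m+1) = ⊥ := by
  rw [mulVecLin_id, Jk_mulVec, eq_bot_iff, Ideal.span_le]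
  rintro _ ⟨r, c, rfl⟩
  have := Fintype.card_le_of_embedding r
  simp at this

theorem DB_fin : DB A (Fin m → A) := by
  refine ⟨m, fun j => Pi.single j 1, fun j => LinearMap.proj j, fun x => ?_⟩
  ext i
  simp [Finset.sum_apply, Pi.single_apply]

/-- Matrix hypotheses. -/
def MH (F : Matrix (Fin m) (Fin m) A) (h : ℕ → A) : Prop :=
  (∀ k ≤ m, Ideal.span (minorsSet F k) = Ideal.span {∏ i ∈ Finset.range k, h i}) ∧
    ∀ i, h i ∣ h (i+1)

/-- The diagonal matrix. -/
def DM (m : ℕ) (h : ℕ → A) : Matrix (Fin m) (Fin m) A := Matrix.diagonal fun i => h i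

/-- Diagonalisation up to `s`. -/
def AdM (F : Matrix (Fin m) (Fin m) A) (h : ℕ → A) (s : A) : Prop :=
  ∃ p π q κ : Matrix (Fin m) (Fin m) A, π * p = s • (1 : Matrix (Fin m) (Fin m) A) ∧
    p * π = s • (1 : Matrix (Fin m) (Fin m) A) ∧ κ * q = s • (1 : Matrix (Fin m) (Fin m) A) ∧
    q * κ = s • (1 : Matrix (Fin m) (Fin m) A) ∧ F * p = q * DM m h

theorem AdM_iff (F : Matrix (Fin m) (Fin m) A) (h : ℕ → A) (s : A) :
    AdM F h s ↔ Ad F.mulVecLin m h s := by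
  constructor
  · rintro ⟨p, π, q, κ, h1, h2, h3, h4, h5⟩
    refine ⟨fun j i => p i j, fun i => (LinearMap.proj i).comp π.mulVecLin,
      fun j i => q i j, fun i => (LinearMap.proj i).comp κ.mulVecLin, ?_, ?_, ?_, ?_, ?_⟩
    · intro i j
      have := congrFun (congrFun h1 i) j
      simpa [Matrix.mul_apply, Matrix.one_apply, Matrix.mulVec, dotProduct] using this
    · intro x
      have := congrArg (fun M => M *ᵥ x) h2
      simp only [Matrix.smul_mulVec, Matrix.one_mulVec, ← Matrix.mulVec_mulVec] at this
      rw [← this]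
      ext i
      simp [Matrix.mulVec, dotProduct, mul_comm]
    · intro i j
      have := congrFun (congrFun h3 i) j
      simpa [Matrix.mul_apply, Matrix.one_apply, Matrix.mulVec, dotProduct] using this
    · intro x
      have := congrArg (fun M => M *ᵥ x) h4
      simp only [Matrix.smul_mulVec, Matrix.one_mulVec, ← Matrix.mulVec_mulVec] at this
      rw [← this]
      ext i
      simp [Matrix.mulVec, dotProduct, mul_comm]
    · intro j
      ext i
      have := congrFun (congrFun h5 i) j
      simp only [DM, Matrix.mul_diagonal] at this
      rw [Matrix.mul_apply] at this
      simp [Matrix.mulVec, dotProduct, this, mul_comm]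
  · rintro ⟨p, π, q, κ, H⟩
    have lin : ∀ (f : (Fin m → A) →ₗ[A] A) (x : Fin m → A), ∑ j, f (Pi.single j 1) * x j = f x := by
      intro f x
      rw [LinearMap.pi_apply_eq_sum_univ f]
      refine Finset.sum_congr rfl fun y _ => ?_
      rw [smul_eq_mul, mul_comm]
      congr 2
      ext z; simp [Pi.single_apply, eq_comm]
    refine ⟨Matrix.of fun i j => p j i, Matrix.of fun i j => π i (Pi.single j 1),
      Matrix.of fun i j => q j i, Matrix.of fun i j => κ i (Pi.single j 1), ?_, ?_, ?_, ?_, ?_⟩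
    · ext i j
      simp only [Matrix.mul_apply, Matrix.of_apply]
      rw [lin, H.pp]; simp [Matrix.one_apply]
    · ext i j
      have := congrFun (H.ps (Pi.single j 1)) i
      simp [Pi.single_apply] at this
      simp [Matrix.mul_apply, Matrix.one_apply, this, mul_comm]
    · ext i j
      simp only [Matrix.mul_apply, Matrix.of_apply]
      rw [lin, H.qq]; simp [Matrix.one_apply]
    · ext i j
      have := congrFun (H.qs (Pi.single j 1)) i
      simp [Pi.single_apply] at this
      simp [Matrix.mul_apply, Matrix.one_apply, this, mul_comm]
    · ext i j
      have := congrFun (H.ff j) i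
      simp [Matrix.mulVec, dotProduct] at this
      rw [DM, Matrix.mul_diagonal, Matrix.mul_apply]; simp [this, mul_comm]

theorem MH.hyp {F : Matrix (Fin m) (Fin m) A} {h : ℕ → A} (H : MH F h) : Hyp F.mulVecLin m h where
  dP := DB_fin
  dQ := DB_fin
  jP k hk := Jk_id hk
  jQ k hk := Jk_id hk
  jF k hk := by rw [Jk_mulVec, H.1 k hk]
  ch := H.2

theorem smith_pidM [IsDomain A] [IsPrincipalIdealRing A] {F : Matrix (Fin m) (Fin m) A}
    {h : ℕ → A} (H : MH F h) : AdM F h 1 := by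
  rw [AdM_iff]
  exact smith_pid m _ h H.hyp Jk_id' Jk_id'

theorem smith_localM {B : Type v} [CommRing B] [IsDomain B] [IsLocalRing B]
    [UniqueFactorizationMonoid B] {F : Matrix (Fin m) (Fin m) (Polynomial B)}
    (hb : ℕ → B) (hok : ∀ i, OKEntry (hb i)) (H : MH F (fun i => Polynomial.C (hb i)))
    (s : Polynomial B) (hs : s.Monic) (hA : AdM F (fun i => Polynomial.C (hb i)) s) :
    AdM F (fun i => Polynomial.C (hb i)) 1 := by
  rw [AdM_iff] at hA ⊢
  exact smith_local m _ hb hok H.hyp s hs hA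

theorem MH.map {A' : Type*} [CommRing A'] (f : A →+* A') {F : Matrix (Fin m) (Fin m) A}
    {h : ℕ → A} (H : MH F h) : MH (F.map f) (fun i => f (h i)) := by
  refine ⟨fun k hk => ?_, fun i => map_dvd f (H.2 i)⟩
  have e1 : minorsSet (F.map f) k = f '' (minorsSet F k) := by
    refine Set.ext fun d => ⟨?_, ?_⟩
    · rintro ⟨r, c, rfl⟩
      exact ⟨_, ⟨r, c, rfl⟩, by rw [RingHom.map_det]; rfl⟩
    · rintro ⟨_, ⟨r, c, rfl⟩, rfl⟩
      exact ⟨r, c, by rw [RingHom.map_det]; rfl⟩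
  rw [e1, ← Ideal.map_span, H.1 k hk, Ideal.map_span, Set.image_singleton, map_prod]

theorem DM_map {A' : Type*} [CommRing A'] (f : A →+* A') (h : ℕ → A) :
    (DM m h).map f = DM m (fun i => f (h i)) := by
  unfold DM
  rw [Matrix.diagonal_map (map_zero f)]

theorem AdM.map {A' : Type*} [CommRing A'] (f : A →+* A') {F : Matrix (Fin m) (Fin m) A}
    {h : ℕ → A} {s : A} (H : AdM F h s) : AdM (F.map f) (fun i => f (h i)) (f s) := by
  obtain ⟨p, π, q, κ, h1, h2, h3, h4, h5⟩ := H
  have e : (s • (1 : Matrix (Fin m) (Fin m) A)).map f = f s • 1 := by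
    ext i j
    by_cases hij : i = j <;> simp [Matrix.one_apply, hij]
  refine ⟨p.map f, π.map f, q.map f, κ.map f, ?_, ?_, ?_, ?_, ?_⟩
  · rw [← Matrix.map_mul, h1, e]
  · rw [← Matrix.map_mul, h2, e]
  · rw [← Matrix.map_mul, h3, e]
  · rw [← Matrix.map_mul, h4, e]
  · rw [← Matrix.map_mul, h5, Matrix.map_mul, DM_map]

/-- Clearing denominators: descend `AdM` along an injective localization-like map. -/
theorem AdM.descend {A' : Type*} [CommRing A'] (f : A →+* A') (hf : Function.Injective f)
    (S : Submonoid A)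
    (hS : ∀ n (x : Fin n → A'), ∃ c ∈ S, ∀ i, ∃ y, f y = f c * x i)
    {F : Matrix (Fin m) (Fin m) A} {h : ℕ → A}
    (H : AdM (F.map f) (fun i => f (h i)) 1) : ∃ s ∈ S, AdM F h s := by
  obtain ⟨p, π, q, κ, h1, h2, h3, h4, h5⟩ := H
  have hS' : ∀ M : Matrix (Fin m) (Fin m) A', ∃ c ∈ S, ∃ N : Matrix (Fin m) (Fin m) A,
      N.map f = f c • M := by
    intro M
    obtain ⟨c, hc, hy⟩ := hS (m * m) (fun i => M (finProdFinEquiv.symm i).1 (finProdFinEquiv.symm i).2)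
    choose y hy using hy
    refine ⟨c, hc, Matrix.of fun i j => y (finProdFinEquiv (i, j)), ?_⟩
    ext i j
    simp [hy]
  obtain ⟨a, ha, p1, hp⟩ := hS' p
  obtain ⟨b, hb, π1, hπ⟩ := hS' π
  obtain ⟨c, hc, q1, hq⟩ := hS' q
  obtain ⟨d, hd, κ1, hκ⟩ := hS' κ
  have inj : ∀ M N : Matrix (Fin m) (Fin m) A, M.map f = N.map f → M = N := by
    intro M N hMN
    ext i j
    exact hf (congrFun (congrFun hMN i) j)
  have sm : ∀ (c : A) (M : Matrix (Fin m) (Fin m) A), (c • M).map f = f c • M.map f := by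
    intro c M; ext i j; simp
  have on : (1 : Matrix (Fin m) (Fin m) A).map f = 1 := by
    ext i j
    by_cases hij : i = j <;> simp [Matrix.one_apply, hij]
  refine ⟨a * b * c * d, S.mul_mem (S.mul_mem (S.mul_mem ha hb) hc) hd,
    c • p1, d • π1, a • q1, b • κ1, ?_, ?_, ?_, ?_, ?_⟩
  · apply inj
    simp only [Matrix.map_mul, sm, hp, hπ, hq, hκ, on, Matrix.smul_mul, Matrix.mul_smul, h1, smul_smul,
      ← map_mul, one_smul]
    congr 2; ring
  · apply inj
    simp only [Matrix.map_mul, sm, hp, hπ, hq, hκ, on, Matrix.smul_mul, Matrix.mul_smul, h2, smul_smul,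
      ← map_mul, one_smul]
    congr 2; ring
  · apply inj
    simp only [Matrix.map_mul, sm, hp, hπ, hq, hκ, on, Matrix.smul_mul, Matrix.mul_smul, h3, smul_smul,
      ← map_mul, one_smul]
    congr 2; ring
  · apply inj
    simp only [Matrix.map_mul, sm, hp, hπ, hq, hκ, on, Matrix.smul_mul, Matrix.mul_smul, h4, smul_smul,
      ← map_mul, one_smul]
    congr 2; ring
  · apply inj
    simp only [Matrix.map_mul, sm, hp, hπ, hq, hκ, on, Matrix.smul_mul, Matrix.mul_smul, h5, smul_smul,
      ← map_mul, one_smul, DM_map]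
    congr 2; ring
end Mat

end Part5

section Part6
section Patch
open Polynomial
variable {A : Type*} [CommRing A] {m : ℕ}

theorem meq_refl (F : Matrix (Fin m) (Fin m) A) : MatEquiv F F :=
  ⟨1, 1, by simp, by simp, by simp⟩

theorem meq_trans {F G H : Matrix (Fin m) (Fin m) A} (h1 : MatEquiv F G) (h2 : MatEquiv G H) :
    MatEquiv F H := by
  obtain ⟨U, V, hU, hV, rfl⟩ := h1
  obtain ⟨U', V', hU', hV', rfl⟩ := h2
  refine ⟨U * U', V' * V, ?_, ?_, by simp only [Matrix.mul_assoc]⟩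
  · rw [Matrix.det_mul]; exact hU.mul hU'
  · rw [Matrix.det_mul]; exact hV'.mul hV

theorem meq_map {A' : Type*} [CommRing A'] (f : A →+* A') {F G : Matrix (Fin m) (Fin m) A}
    (h1 : MatEquiv F G) : MatEquiv (F.map f) (G.map f) := by
  obtain ⟨U, V, hU, hV, rfl⟩ := h1
  refine ⟨U.map f, V.map f, ?_, ?_, by rw [Matrix.map_mul, Matrix.map_mul]⟩
  · have := hU.map f
    rwa [RingHom.map_det] at this
  · have := hV.map f
    rwa [RingHom.map_det] at this

theorem meq_symm {F G : Matrix (Fin m) (Fin m) A} (h1 : MatEquiv F G) : MatEquiv G F := by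
  obtain ⟨U, V, hU, hV, rfl⟩ := h1
  refine ⟨U⁻¹, V⁻¹, ?_, ?_, ?_⟩
  · rw [Matrix.det_nonsing_inv]; exact hU.ringInverse
  · rw [Matrix.det_nonsing_inv]; exact hV.ringInverse
  · rw [← Matrix.mul_assoc, ← Matrix.mul_assoc, Matrix.nonsing_inv_mul _ hU, Matrix.one_mul,
      Matrix.mul_assoc, Matrix.mul_nonsing_inv _ hV, Matrix.mul_one]

theorem AdM_one_iff (F : Matrix (Fin m) (Fin m) A) (h : ℕ → A) :
    AdM F h 1 ↔ MatEquiv F (DM m h) := by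
  constructor
  · rintro ⟨p, π, q, κ, h1, h2, h3, h4, h5⟩
    rw [one_smul] at h1 h2 h3 h4
    refine ⟨q, π, ?_, ?_, ?_⟩
    · exact Matrix.isUnit_det_of_right_inverse h4
    · exact Matrix.isUnit_det_of_right_inverse h1
    · rw [← h5, Matrix.mul_assoc, h2, Matrix.mul_one]
  · rintro ⟨U, V, hU, hV, rfl⟩
    refine ⟨V⁻¹, V, U, U⁻¹, ?_, ?_, ?_, ?_, ?_⟩ <;> try rw [one_smul]
    · exact Matrix.mul_nonsing_inv _ hV
    · exact Matrix.nonsing_inv_mul _ hV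
    · exact Matrix.nonsing_inv_mul _ hU
    · exact Matrix.mul_nonsing_inv _ hU
    · rw [Matrix.mul_assoc, Matrix.mul_nonsing_inv _ hV, Matrix.mul_one]

/-- The substitution `X ↦ X + aY`. -/
noncomputable def shiftHom (a : A) : A[X] →+* A[X][X] :=
  eval₂RingHom ((Polynomial.C : A[X] →+* A[X][X]).comp Polynomial.C)
    (Polynomial.C Polynomial.X + Polynomial.C (Polynomial.C a) * Polynomial.X)

theorem shiftHom_dvd (a : A) (f : A[X]) :
    Polynomial.C (Polynomial.C a) * Polynomial.X ∣ shiftHom a f - Polynomial.C f := by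
  have h1 := Polynomial.sub_dvd_eval_sub
    (Polynomial.C Polynomial.X + Polynomial.C (Polynomial.C a) * Polynomial.X : A[X][X])
    (Polynomial.C Polynomial.X)
    (f.map ((Polynomial.C : A[X] →+* A[X][X]).comp Polynomial.C))
  rw [add_sub_cancel_left, Polynomial.eval_map, Polynomial.eval_map] at h1
  have h2 : eval₂ ((Polynomial.C : A[X] →+* A[X][X]).comp Polynomial.C)
      (Polynomial.C Polynomial.X) f = Polynomial.C f := by
    rw [← Polynomial.hom_eval₂, Polynomial.eval₂_C_X]
  rw [h2] at h1
  exact h1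

theorem shiftHom_C (a b : A) : shiftHom a (Polynomial.C b) = Polynomial.C (Polynomial.C b) := by
  simp [shiftHom]

theorem shiftHom_X (a : A) : shiftHom a Polynomial.X =
    (Polynomial.C Polynomial.X + Polynomial.C (Polynomial.C a) * Polynomial.X) := by
  simp [shiftHom]

theorem patch_local [IsDomain A] (F : Matrix (Fin m) (Fin m) A[X]) (h : ℕ → A) (σ : A) (hσ : σ ≠ 0)
    (H : AdM F (fun i => Polynomial.C (h i)) (Polynomial.C σ)) :
    MatEquiv (F.map (shiftHom σ)) (F.map (Polynomial.C : A[X] →+* A[X][X])) := by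
  obtain ⟨p, π, q, κ, h1, h2, h3, h4, h5⟩ := H
  set τ := shiftHom σ with hτ
  set γ := (Polynomial.C : A[X] →+* A[X][X]) with hγ
  set t : A[X][X] := Polynomial.C (Polynomial.C σ) with ht
  set Y : A[X][X] := Polynomial.X with hY
  have ht0 : t ≠ 0 := by
    simpa [ht] using hσ
  have hE : ∀ M : Matrix (Fin m) (Fin m) A[X], ∃ E : Matrix (Fin m) (Fin m) A[X][X],
      M.map τ = M.map γ + t • (Y • E) := by
    intro M
    choose E hE using fun i j => shiftHom_dvd σ (M i j)
    refine ⟨Matrix.of E, ?_⟩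
    ext1 i j
    have := hE i j
    simp only [Matrix.map_apply, Matrix.add_apply, Matrix.smul_apply, Matrix.of_apply, smul_eq_mul]
    rw [← mul_assoc, ← this]
    ring
  obtain ⟨E, hEq⟩ := hE q
  obtain ⟨E2, hEp⟩ := hE p
  have smap : ∀ (f : A[X] →+* A[X][X]), f (Polynomial.C σ) = t → ∀ M N : Matrix (Fin m) (Fin m) A[X],
      M * N = Polynomial.C σ • (1 : Matrix (Fin m) (Fin m) A[X]) →
      M.map f * N.map f = t • (1 : Matrix (Fin m) (Fin m) A[X][X]) := by
    intro f hf M N hMN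
    rw [← Matrix.map_mul, hMN]
    ext1 i j
    by_cases hij : i = j <;> simp [hij, hf]
  have hτt : τ (Polynomial.C σ) = t := shiftHom_C σ σ
  have hγt : γ (Polynomial.C σ) = t := rfl
  have h3' := smap γ hγt _ _ h3
  have h4' := smap γ hγt _ _ h4
  have h4'' := smap τ hτt _ _ h4
  have h1' := smap γ hγt _ _ h1
  have h2' := smap γ hγt _ _ h2
  have h1'' := smap τ hτt _ _ h1
  have h2'' := smap τ hτt _ _ h2
  have h5' : F.map γ * p.map γ = q.map γ * DM m (fun i => t |> fun _ => γ (Polynomial.C (h i))) := by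
    rw [← Matrix.map_mul, h5, Matrix.map_mul, DM_map]
  have h5'' : F.map τ * p.map τ = q.map τ * DM m (fun i => γ (Polynomial.C (h i))) := by
    rw [← Matrix.map_mul, h5, Matrix.map_mul, DM_map]
    congr 2
    funext i
    exact shiftHom_C σ (h i)
  have cancel : ∀ M N : Matrix (Fin m) (Fin m) A[X][X], t • M = t • N → M = N := by
    intro M N hMN
    ext1 i j
    have := congrFun (congrFun hMN i) j
    exact mul_left_cancel₀ ht0 this
  set q1 := q.map γ
  set q2 := q.map τ
  set p1 := p.map γ
  set p2 := p.map τ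
  set κ1 := κ.map γ
  set κ2 := κ.map τ
  set π1 := π.map γ
  set π2 := π.map τ
  set G := 1 + Y • (E * κ1)
  set H := 1 - Y • (E2 * π2)
  have eG : t • G = q2 * κ1 := by
    rw [hEq, Matrix.add_mul, h4', smul_add]; simp
  have eG' : t • (1 - Y • (E * κ2)) = q1 * κ2 := by
    have : q1 = q2 - t • Y • E := by rw [hEq]; abel
    rw [this, Matrix.sub_mul, h4'', smul_sub]; simp
  have eH : t • H = p1 * π2 := by
    have : p1 = p2 - t • Y • E2 := by rw [hEp]; abel
    rw [this, Matrix.sub_mul, h2'', smul_sub]; simp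
  have eH' : t • (1 + Y • (E2 * π1)) = p2 * π1 := by
    rw [hEp, Matrix.add_mul, h2', smul_add]; simp
  refine ⟨G, H, ?_, ?_, ?_⟩
  · refine Matrix.isUnit_det_of_right_inverse (B := 1 - Y • (E * κ2)) ?_
    apply cancel; apply cancel
    calc t • t • (G * (1 - Y • (E * κ2))) = (t • G) * (t • (1 - Y • (E * κ2))) := by
          rw [Matrix.smul_mul, Matrix.mul_smul]
      _ = q2 * (κ1 * q1) * κ2 := by rw [eG, eG']; simp only [Matrix.mul_assoc]
      _ = t • t • 1 := by
        rw [h3', Matrix.mul_smul, Matrix.mul_one, Matrix.smul_mul, h4'']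
  · refine Matrix.isUnit_det_of_right_inverse (B := 1 + Y • (E2 * π1)) ?_
    apply cancel; apply cancel
    calc t • t • (H * (1 + Y • (E2 * π1))) = (t • H) * (t • (1 + Y • (E2 * π1))) := by
          rw [Matrix.smul_mul, Matrix.mul_smul]
      _ = p1 * (π2 * p2) * π1 := by rw [eH, eH']; simp only [Matrix.mul_assoc]
      _ = t • t • 1 := by
        rw [h1'', Matrix.mul_smul, Matrix.mul_one, Matrix.smul_mul, h2']
  · apply cancel; apply cancel
    symm
    calc t • t • (G * F.map γ * H) = (t • G) * F.map γ * (t • H) := by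
          rw [Matrix.smul_mul, Matrix.mul_smul, Matrix.smul_mul]
      _ = q2 * κ1 * (F.map γ * p1) * π2 := by rw [eG, eH]; simp only [Matrix.mul_assoc]
      _ = q2 * (κ1 * q1) * DM m (fun i => γ (Polynomial.C (h i))) * π2 := by
        rw [h5']; simp only [Matrix.mul_assoc]
      _ = t • (q2 * DM m (fun i => γ (Polynomial.C (h i))) * π2) := by
        rw [h3', Matrix.mul_smul, Matrix.mul_one, Matrix.smul_mul, Matrix.smul_mul]
      _ = t • (F.map τ * (p2 * π2)) := by rw [← h5'', Matrix.mul_assoc]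
      _ = t • t • F.map τ := by rw [h2'', Matrix.mul_smul, Matrix.mul_one]

theorem patch [IsDomain A] (F : Matrix (Fin m) (Fin m) A[X]) (h : ℕ → A)
    (H : ∀ M : Ideal A, M.IsMaximal → ∃ σ, σ ∉ M ∧
      AdM F (fun i => Polynomial.C (h i)) (Polynomial.C σ)) :
    MatEquiv F ((F.map (evalRingHom (0:A))).map (Polynomial.C : A →+* A[X])) := by
  let I : Ideal A :=
    { carrier := {a | MatEquiv (F.map (shiftHom a)) (F.map (Polynomial.C : A[X] →+* A[X][X]))}
      zero_mem' := by
        have : (shiftHom (0:A)) = Polynomial.C := by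
          ext a
          · rw [RingHom.comp_apply, shiftHom_C]; rfl
          · rw [shiftHom_X]; simp
        change MatEquiv _ _
        rw [this]; exact meq_refl _
      add_mem' := by
        intro a b ha hb
        change MatEquiv _ _ at ha hb ⊢
        let θ : A[X][X] →+* A[X][X] := eval₂RingHom (shiftHom a) Polynomial.X
        have h1 := meq_map θ hb
        rw [Matrix.map_map, Matrix.map_map] at h1
        have e1 : (θ ∘ shiftHom b) = shiftHom (a + b) := by
          rw [← RingHom.coe_comp]
          congr 1
          apply Polynomial.ringHom_ext
          · intro c; simp [shiftHom_C, θ]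
          · simp [shiftHom_X, shiftHom_C, θ]; ring
        have e2 : (θ ∘ Polynomial.C) = shiftHom a := by
          funext x; simp [θ]
        rw [e1, e2] at h1
        exact meq_trans h1 ha
      smul_mem' := by
        intro c a ha
        change MatEquiv _ _ at ha ⊢
        let θ : A[X][X] →+* A[X][X] := eval₂RingHom Polynomial.C
          (Polynomial.C (Polynomial.C c) * Polynomial.X)
        have h1 := meq_map θ ha
        rw [Matrix.map_map, Matrix.map_map] at h1
        have e1 : (θ ∘ shiftHom a) = shiftHom (c • a) := by
          rw [← RingHom.coe_comp]
          congr 1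
          apply Polynomial.ringHom_ext
          · intro c; simp [shiftHom_C, θ]
          · simp [shiftHom_X, shiftHom_C, θ]; ring
        have e2 : (θ ∘ Polynomial.C) = (Polynomial.C : A[X] →+* A[X][X]) := by
          funext x; simp [θ]
        rw [e1, e2] at h1
        exact h1 }
  have hI : I = ⊤ := by
    by_contra hI
    obtain ⟨M, hM, hIM⟩ := Ideal.exists_le_maximal I hI
    obtain ⟨σ, hσ, hA⟩ := H M hM
    exact hσ (hIM (patch_local F h σ (fun h0 => hσ (h0 ▸ M.zero_mem)) hA))
  have h1 : MatEquiv (F.map (shiftHom 1)) (F.map (Polynomial.C : A[X] →+* A[X][X])) := by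
    have : (1 : A) ∈ I := by rw [hI]; trivial
    exact this
  let θ : A[X][X] →+* A[X] := eval₂RingHom ((Polynomial.C).comp (evalRingHom (0:A))) Polynomial.X
  have h2 := meq_map θ h1
  rw [Matrix.map_map, Matrix.map_map] at h2
  have e1 : (θ ∘ shiftHom 1) = RingHom.id _ := by
    rw [← RingHom.coe_comp]
    congr 1
    apply Polynomial.ringHom_ext
    · intro c; simp [shiftHom_C, θ]
    · simp [shiftHom_X, shiftHom_C, θ]
  have e2 : (θ ∘ (Polynomial.C : A[X] →+* A[X][X])) = (Polynomial.C : A →+* A[X]) ∘ (evalRingHom (0:A)) := by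
    funext x; simp [θ]
  rw [e1, e2] at h2
  rw [Matrix.map_map]
  have e3 : F.map (RingHom.id A[X]) = F := by ext1 i j; rfl
  rw [e3] at h2
  exact h2
end Patch

end Part6

section Part7
universe u

theorem prime_loc {A B : Type*} [CommRing A] [IsDomain A] [CommRing B] [Algebra A B] (S : Submonoid A)
    (hS : S ≤ nonZeroDivisors A)
    [IsLocalization S B] {p : A} (hp : Prime p) (hd : Disjoint (S : Set A) (Ideal.span {p} : Ideal A)) :
    Prime (algebraMap A B p) := by
  have h1 : (Ideal.span {p} : Ideal A).IsPrime := (Ideal.span_singleton_prime hp.ne_zero).2 hp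
  have h2 := IsLocalization.isPrime_of_isPrime_disjoint S B _ h1 hd
  rw [Ideal.map_span, Set.image_singleton] at h2
  refine (Ideal.span_singleton_prime ?_).1 h2
  intro h0
  exact hp.ne_zero (IsLocalization.injective B hS (by simpa using h0))

theorem ufd_loc {A B : Type*} [CommRing A] [IsDomain A] [UniqueFactorizationMonoid A]
    [CommRing B] [IsDomain B] [Algebra A B] (S : Submonoid A) (hS : S ≤ nonZeroDivisors A)
    [IsLocalization S B] : UniqueFactorizationMonoid B := by
  refine UniqueFactorizationMonoid.iff_exists_prime_mem_of_isPrime.2 ?_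
  intro Q hQ hQp
  have hP : (Q.comap (algebraMap A B)).IsPrime := hQp.comap _
  have hd := (IsLocalization.isPrime_iff_isPrime_disjoint S B Q).1 hQp
  have hne : Q.comap (algebraMap A B) ≠ ⊥ := by
    intro h0
    apply hQ
    rw [← IsLocalization.map_comap S B Q]
    simp [h0]
  obtain ⟨p, hp, hpp⟩ := UniqueFactorizationMonoid.iff_exists_prime_mem_of_isPrime.1
    ‹UniqueFactorizationMonoid A› (I := Q.comap (algebraMap A B)) hne hP
  refine ⟨algebraMap A B p, hp, prime_loc S hS hpp ?_⟩
  refine hd.2.mono_right ?_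
  exact (Ideal.span_singleton_le_iff_mem _).2 hp

theorem okEntry_loc {D : Type u} [CommRing D] [IsDomain D] [IsPrincipalIdealRing D] {d : ℕ}
    (M : Ideal (MvPolynomial (Fin d) D)) [M.IsPrime] (a : D) :
    OKEntry (algebraMap (MvPolynomial (Fin d) D) (Localization.AtPrime M) (MvPolynomial.C a)) := by
  by_cases ha : a = 0
  · left; simp [ha]
  right
  by_cases haM : (MvPolynomial.C a : MvPolynomial (Fin d) D) ∈ M
  swap
  · left
    exact IsLocalization.map_units (Localization.AtPrime M) (⟨_, haM⟩ : M.primeCompl)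
  right
  have hP : (M.comap (MvPolynomial.C : D →+* MvPolynomial (Fin d) D)).IsPrime := Ideal.IsPrime.comap _
  obtain ⟨p, hp⟩ := (IsPrincipalIdealRing.principal (M.comap (MvPolynomial.C : D →+* MvPolynomial (Fin d) D)))
  rw [Ideal.submodule_span_eq] at hp
  have hp0 : p ≠ 0 := by
    rintro rfl
    have : a ∈ M.comap (MvPolynomial.C : D →+* MvPolynomial (Fin d) D) := haM
    rw [hp] at this
    simp at this
    exact ha this
  have hpp : Prime p := (Ideal.span_singleton_prime hp0).1 (hp ▸ hP)
  have hpM : (MvPolynomial.C p : MvPolynomial (Fin d) D) ∈ M := by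
    have : p ∈ M.comap (MvPolynomial.C : D →+* MvPolynomial (Fin d) D) := by
      rw [hp]; exact Ideal.mem_span_singleton_self p
    exact this
  have hpC : Prime (MvPolynomial.C p : MvPolynomial (Fin d) D) := (MvPolynomial.prime_C_iff _).2 hpp
  have hS := M.primeCompl_le_nonZeroDivisors
  have ht : Prime (algebraMap (MvPolynomial (Fin d) D) (Localization.AtPrime M) (MvPolynomial.C p)) := by
    refine prime_loc M.primeCompl hS hpC ?_
    rw [Set.disjoint_left]
    intro x hx hx2
    exact hx ((Ideal.span_singleton_le_iff_mem _).2 hpM hx2)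
  refine ⟨_, ht, ?_, ?_⟩
  · have hmax : (Ideal.span {p} : Ideal D).IsMaximal :=
      PrincipalIdealRing.isMaximal_of_irreducible hpp.irreducible
    letI := Ideal.Quotient.field (Ideal.span {p} : Ideal D)
    let I : Ideal (MvPolynomial (Fin d) D) := Ideal.map MvPolynomial.C (Ideal.span {p})
    have hI : I = Ideal.span {MvPolynomial.C p} := by
      simp only [I, Ideal.map_span, Set.image_singleton]
    have hIp : I.IsPrime := by rw [hI]; exact (Ideal.span_singleton_prime hpC.ne_zero).2 hpC
    have e := (MvPolynomial.quotientEquivQuotientMvPolynomial (σ := Fin d) (Ideal.span {p} : Ideal D))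
    have hU : UniqueFactorizationMonoid (MvPolynomial (Fin d) D ⧸ I) :=
      e.toMulEquiv.uniqueFactorizationMonoid inferInstance
    have hs : Ideal.span {algebraMap (MvPolynomial (Fin d) D) (Localization.AtPrime M) (MvPolynomial.C p)} =
        I.map (algebraMap _ _) := by
      rw [hI, Ideal.map_span, Set.image_singleton]
    have hpr : (I.map (algebraMap (MvPolynomial (Fin d) D) (Localization.AtPrime M))).IsPrime := by
      rw [← hs]; exact (Ideal.span_singleton_prime ht.ne_zero).2 ht
    rw [hs]
    haveI : IsDomain (Localization.AtPrime M ⧸ I.map (algebraMap (MvPolynomial (Fin d) D) (Localization.AtPrime M))) :=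
      Ideal.Quotient.isDomain _
    refine ufd_loc (A := MvPolynomial (Fin d) D ⧸ I) (B := Localization.AtPrime M ⧸ I.map (algebraMap (MvPolynomial (Fin d) D) (Localization.AtPrime M))) (Algebra.algebraMapSubmonoid (MvPolynomial (Fin d) D ⧸ I) M.primeCompl) ?_
    rintro _ ⟨x, hx, rfl⟩
    refine mem_nonZeroDivisors_of_ne_zero ?_
    intro h0
    refine hx ?_
    have : x ∈ I := Ideal.Quotient.eq_zero_iff_mem.1 h0
    rw [hI] at this
    exact (Ideal.span_singleton_le_iff_mem _).2 hpM this
  · obtain ⟨c, hc, hac⟩ := (FiniteMultiplicity.of_prime_left hpp ha).exists_eq_pow_mul_and_not_dvd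
    refine ⟨multiplicity p a, ?_⟩
    have hu : IsUnit (algebraMap (MvPolynomial (Fin d) D) (Localization.AtPrime M) (MvPolynomial.C c)) := by
      refine IsLocalization.map_units (Localization.AtPrime M) (⟨_, ?_⟩ : M.primeCompl)
      intro hcM
      apply hac
      have : c ∈ M.comap (MvPolynomial.C : D →+* MvPolynomial (Fin d) D) := hcM
      rwa [hp, Ideal.mem_span_singleton] at this
    have : algebraMap (MvPolynomial (Fin d) D) (Localization.AtPrime M) (MvPolynomial.C a) = 
      algebraMap (MvPolynomial (Fin d) D) (Localization.AtPrime M) (MvPolynomial.C p) ^ (multiplicity p a) * 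
        (algebraMap (MvPolynomial (Fin d) D) (Localization.AtPrime M) (MvPolynomial.C c)) := by
      rw [← map_pow, ← map_pow, ← map_mul, ← map_mul, ← hc]
    rw [this]
    exact hu.mul_right_dvd.2 (dvd_refl _)

end Part7

section Part8
universe u

theorem clear_loc {A B : Type*} [CommRing A] [CommRing B] [Algebra A B] (S : Submonoid A)
    [IsLocalization S B] (n : ℕ) (x : Fin n → B) :
    ∃ c ∈ S, ∀ i, ∃ y, algebraMap A B y = algebraMap A B c * x i := by
  obtain ⟨b, hb⟩ := IsLocalization.exist_integer_multiples_of_finite S x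
  refine ⟨b, b.2, fun i => ?_⟩
  obtain ⟨y, hy⟩ := hb i
  exact ⟨y, by rw [hy, Algebra.smul_def]⟩

theorem clear_poly {A B : Type*} [CommRing A] [CommRing B] [Algebra A B] (S : Submonoid A)
    [IsLocalization S B] (n : ℕ) (x : Fin n → Polynomial B) :
    ∃ c ∈ S, ∀ i, ∃ y, Polynomial.mapRingHom (algebraMap A B) y =
      Polynomial.mapRingHom (algebraMap A B) (Polynomial.C c) * x i := by
  letI := Polynomial.algebra A B
  haveI := Polynomial.isLocalization S B
  obtain ⟨_, ⟨c, hc, rfl⟩, h⟩ := clear_loc (A := Polynomial A) (S.map Polynomial.C) n x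
  exact ⟨c, hc, h⟩

theorem clear_mvpoly {A B : Type*} [CommRing A] [CommRing B] [Algebra A B] (S : Submonoid A)
    [IsLocalization S B] (d n : ℕ) (x : Fin n → MvPolynomial (Fin d) (Polynomial B)) :
    ∃ c ∈ S, ∀ i, ∃ y, MvPolynomial.map (Polynomial.mapRingHom (algebraMap A B)) y =
      MvPolynomial.map (Polynomial.mapRingHom (algebraMap A B)) (MvPolynomial.C (Polynomial.C c)) * x i := by
  letI := Polynomial.algebra A B
  haveI := Polynomial.isLocalization S B
  letI : Algebra (MvPolynomial (Fin d) (Polynomial A)) (MvPolynomial (Fin d) (Polynomial B)) :=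
    MvPolynomial.algebraMvPolynomial
  haveI : IsLocalization ((S.map Polynomial.C).map (MvPolynomial.C (σ := Fin d)))
     (MvPolynomial (Fin d) (Polynomial B)) := MvPolynomial.isLocalization _ _
  obtain ⟨_, ⟨_, ⟨c, hc, rfl⟩, rfl⟩, h⟩ := clear_loc (A := MvPolynomial (Fin d) (Polynomial A))
    ((S.map Polynomial.C).map (MvPolynomial.C (σ := Fin d))) n x
  exact ⟨c, hc, h⟩

/-- interchange of variables -/
noncomputable def swp (K : Type u) [Field K] (d : ℕ) :
    Polynomial (MvPolynomial (Fin d) (Polynomial K)) ≃+* MvPolynomial (Fin d) (Polynomial (Polynomial K)) :=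
  ((MvPolynomial.optionEquivLeft (Polynomial K) (Fin d)).symm.toRingEquiv.trans
    (MvPolynomial.optionEquivRight (Polynomial K) (Fin d)).toRingEquiv).trans
    (MvPolynomial.mapEquiv (Fin d) (Polynomial.Bivariate.swap (R := K)).toRingEquiv)

theorem swp_CC (K : Type u) [Field K] (d : ℕ) (a : Polynomial K) :
    swp K d (Polynomial.C (MvPolynomial.C a)) = MvPolynomial.C (a.map Polynomial.C) := by
  simp [swp]
  exact Polynomial.Bivariate.swap_C a

theorem swp_map (K : Type u) [Field K] (d : ℕ) (a : Polynomial K) :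
    swp K d (a.map ((MvPolynomial.C).comp Polynomial.C)) = MvPolynomial.C (Polynomial.C a) := by
  have : ((swp K d).toRingHom.comp (Polynomial.mapRingHom ((MvPolynomial.C).comp Polynomial.C))) =
     ((MvPolynomial.C).comp Polynomial.C) := by
    apply Polynomial.ringHom_ext
    · intro a
      simpa using swp_CC K d (Polynomial.C a)
    · simp [swp]
      exact (Polynomial.Bivariate.swap_Y (R := K))
  exact RingHom.congr_fun this a

def TT (d : ℕ) : Prop := ∀ (K : Type u) [Field K] (m : ℕ) (F : Matrix (Fin m) (Fin m) (MvPolynomial (Fin d) (Polynomial K)))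
    (h : ℕ → Polynomial K), MH F (fun i => MvPolynomial.C (h i)) →
    MatEquiv F (DM m (fun i => MvPolynomial.C (h i)))

theorem TT_zero : TT.{u} 0 := by
  intro K _ m F h H
  let e := (MvPolynomial.isEmptyRingEquiv (Polynomial K) (Fin 0))
  haveI : IsPrincipalIdealRing (MvPolynomial (Fin 0) (Polynomial K)) :=
    IsPrincipalIdealRing.of_surjective e.symm.toRingHom e.symm.surjective
  exact (AdM_one_iff _ _).1 (smith_pidM H)

/-- ring homomorphisms between commutative rings -/
abbrev CRHom (A B : Type*) [CommRing A] [CommRing B] := A →+* B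

/-- clearing denominators -/
def Clears {A B : Type*} [CommRing A] [CommRing B] (f : CRHom A B) (S : Submonoid A) : Prop :=
  ∀ n (x : Fin n → B), ∃ c ∈ S, ∀ i, ∃ y, f y = f c * x i

theorem absL {A B : Type*} [CommRing A] [CommRing B] (f : CRHom A B) (S : Submonoid A)
    (hf : Function.Injective f) (hc : Clears f S) (m : ℕ) (F : Matrix (Fin m) (Fin m) A)
    (h : ℕ → A) (h' : ℕ → B) (E : ∀ i, f (h i) = h' i)
    (T : ∀ G : Matrix (Fin m) (Fin m) B, MH G h' → MatEquiv G (DM m h')) (H : MH F h) :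
    ∃ s ∈ S, AdM F h s := by
  have E' : (fun i => f (h i)) = h' := funext E
  have H2 := H.map f
  rw [E'] at H2
  have H3 := (AdM_one_iff _ _).2 (T _ H2)
  rw [← E'] at H3
  exact AdM.descend f hf S hc H3

section LL
variable (K : Type u) [Field K] (L : Type u) [Field L] [Algebra (Polynomial K) L] [IsFractionRing (Polynomial K) L]

/-- coefficientwise passage to the fraction field -/
noncomputable def gL (d : ℕ) : MvPolynomial (Fin d) (Polynomial (Polynomial K)) →+*
    MvPolynomial (Fin d) (Polynomial L) :=
  MvPolynomial.map (Polynomial.mapRingHom (algebraMap (Polynomial K) L))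

/-- the comparison map used to invert polynomials in the last variable -/
noncomputable def fL (d : ℕ) : CRHom (Polynomial (MvPolynomial (Fin d) (Polynomial K)))
    (MvPolynomial (Fin d) (Polynomial L)) :=
  (gL K L d).comp (swp K d).toRingHom

theorem gL_inj (d : ℕ) : Function.Injective (gL K L d) := by
  apply MvPolynomial.map_injective
  apply Polynomial.map_injective
  exact IsFractionRing.injective _ _

theorem fL_apply (d : ℕ) (x) : fL K L d x = gL K L d (swp K d x) := rfl

theorem fL_inj (d : ℕ) : Function.Injective (fL K L d) :=
  (gL_inj K L d).comp (swp K d).injective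

theorem fL_CC (d : ℕ) (a : Polynomial K) :
    fL K L d (Polynomial.C (MvPolynomial.C a)) =
      MvPolynomial.C (a.map ((algebraMap (Polynomial K) L).comp Polynomial.C)) := by
  rw [fL_apply, swp_CC, gL]
  simp only [MvPolynomial.map_C, Polynomial.coe_mapRingHom, Polynomial.map_map]

/-- monic polynomials in the last variable, with coefficients in the field -/
noncomputable def SL (K : Type u) [Field K] (d : ℕ) : Submonoid (Polynomial (MvPolynomial (Fin d) (Polynomial K))) where
  carrier := {p | ∃ q : Polynomial K, q.Monic ∧ p = q.map ((MvPolynomial.C).comp Polynomial.C)}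
  one_mem' := ⟨1, Polynomial.monic_one, by simp⟩
  mul_mem' := by
    rintro _ _ ⟨q, hq, rfl⟩ ⟨r, hr, rfl⟩
    exact ⟨q * r, hq.mul hr, by rw [Polynomial.map_mul]⟩

theorem SL_clear (d : ℕ) : Clears (fL K L d) (SL K d) := by
  intro n x
  obtain ⟨c, hc, hy⟩ := clear_mvpoly (nonZeroDivisors (Polynomial K)) d n x
  have hc0 : c ≠ 0 := nonZeroDivisors.ne_zero hc
  refine ⟨_, ⟨c * Polynomial.C (c.leadingCoeff⁻¹), Polynomial.monic_mul_leadingCoeff_inv hc0, rfl⟩, ?_⟩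
  intro i
  obtain ⟨y, hy⟩ := hy i
  refine ⟨(swp K d).symm (MvPolynomial.C (Polynomial.C (Polynomial.C (c.leadingCoeff⁻¹))) * y), ?_⟩
  have hy' : gL K L d y = gL K L d (MvPolynomial.C (Polynomial.C c)) * x i := hy
  rw [fL_apply, fL_apply, swp_map, RingEquiv.apply_symm_apply]
  simp only [map_mul]
  rw [hy']
  ring

end LL

theorem SL_monic (K : Type u) [Field K] (d : ℕ) (s) (hs : s ∈ SL K d) : s.Monic := by
  obtain ⟨q, hq, rfl⟩ := hs
  exact Polynomial.Monic.map _ hq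

theorem TT_monic_aux (K : Type u) [Field K] (L : Type u) [Field L] [Algebra (Polynomial K) L]
    [IsFractionRing (Polynomial K) L] {d : ℕ} (hd : TT.{u} d) (m : ℕ)
    (F : Matrix (Fin m) (Fin m) (Polynomial (MvPolynomial (Fin d) (Polynomial K))))
    (h : ℕ → Polynomial K) (H : MH F (fun i => Polynomial.C (MvPolynomial.C (h i)))) :
    ∃ s : Polynomial (MvPolynomial (Fin d) (Polynomial K)), s.Monic ∧
      AdM F (fun i => Polynomial.C (MvPolynomial.C (h i))) s := by
  obtain ⟨s, hs, hA⟩ := absL (fL K L d) (SL K d) (fL_inj K L d) (SL_clear K L d) m F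
    (fun i => Polynomial.C (MvPolynomial.C (h i)))
    (fun i => MvPolynomial.C ((h i).map ((algebraMap (Polynomial K) L).comp Polynomial.C)))
    (fun i => fL_CC K L d (h i)) (fun G hG => hd L m G _ hG) H
  exact ⟨s, SL_monic K d s hs, hA⟩

theorem TT_monic {d : ℕ} (hd : TT.{u} d) (K : Type u) [Field K] (m : ℕ)
    (F : Matrix (Fin m) (Fin m) (Polynomial (MvPolynomial (Fin d) (Polynomial K))))
    (h : ℕ → Polynomial K) (H : MH F (fun i => Polynomial.C (MvPolynomial.C (h i)))) :
    ∃ s : Polynomial (MvPolynomial (Fin d) (Polynomial K)), s.Monic ∧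
      AdM F (fun i => Polynomial.C (MvPolynomial.C (h i))) s :=
  TT_monic_aux K (FractionRing (Polynomial K)) hd m F h H

theorem loc_aux {A B : Type u} [CommRing A] [IsDomain A] [CommRing B] [IsDomain B] [IsLocalRing B]
    [UniqueFactorizationMonoid B] [Algebra A B] (S : Submonoid A) [IsLocalization S B]
    (hS : S ≤ nonZeroDivisors A) (m : ℕ) (F : Matrix (Fin m) (Fin m) (Polynomial A))
    (h : ℕ → A) (H : MH F (fun i => Polynomial.C (h i))) (hok : ∀ i, OKEntry (algebraMap A B (h i)))
    (s : Polynomial A) (hs : s.Monic) (hA : AdM F (fun i => Polynomial.C (h i)) s) :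
    ∃ σ ∈ S, AdM F (fun i => Polynomial.C (h i)) (Polynomial.C σ) := by
  have inj : Function.Injective (algebraMap A B) := IsLocalization.injective B hS
  let f : Polynomial A →+* Polynomial B := Polynomial.mapRingHom (algebraMap A B)
  have ef : ∀ a : A, f (Polynomial.C a) = Polynomial.C (algebraMap A B a) := by
    intro a; simp [f]
  have hf : Function.Injective f := Polynomial.map_injective _ inj
  have H1 := MH.map (A' := Polynomial B) f H
  have A1 := AdM.map (A' := Polynomial B) f hA
  simp only [ef] at H1 A1
  have A2 := smith_localM (fun i => algebraMap A B (h i)) hok H1 (f s) (hs.map _) A1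
  simp only [← ef] at A2
  obtain ⟨_, ⟨c, hc, rfl⟩, h2⟩ := AdM.descend f hf (S.map Polynomial.C) (by
    intro n x
    obtain ⟨c, hc, hy⟩ := clear_poly S n x
    exact ⟨_, ⟨c, hc, rfl⟩, hy⟩) A2
  exact ⟨c, hc, h2⟩

theorem TT_loc {d : ℕ} (hd : TT.{u} d) (K : Type u) [Field K] (m : ℕ)
    (F : Matrix (Fin m) (Fin m) (Polynomial (MvPolynomial (Fin d) (Polynomial K))))
    (h : ℕ → Polynomial K) (H : MH F (fun i => Polynomial.C (MvPolynomial.C (h i))))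
    (M : Ideal (MvPolynomial (Fin d) (Polynomial K))) (hM : M.IsMaximal) : ∃ σ, σ ∉ M ∧
      AdM F (fun i => Polynomial.C (MvPolynomial.C (h i))) (Polynomial.C σ) := by
  obtain ⟨s, hs, hA⟩ := TT_monic hd K m F h H
  have hp : M.IsPrime := hM.isPrime
  have hS := M.primeCompl_le_nonZeroDivisors
  haveI : UniqueFactorizationMonoid (Localization.AtPrime M) := ufd_loc (B := Localization.AtPrime M) M.primeCompl hS
  exact loc_aux (B := Localization.AtPrime M) M.primeCompl hS m F (fun i => MvPolynomial.C (h i)) H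
    (fun i => okEntry_loc M (h i)) s hs hA

theorem TT_succ {d : ℕ} (hd : TT.{u} d) : TT.{u} (d+1) := by
  intro K _ m F h H
  let e := MvPolynomial.finSuccEquiv (Polynomial K) d
  let f := e.toRingEquiv.toRingHom
  let f' := e.symm.toRingEquiv.toRingHom
  have ef : ∀ a, f (MvPolynomial.C a) = Polynomial.C (MvPolynomial.C a) := by
    intro a
    simp [f, e, MvPolynomial.finSuccEquiv_apply]
  have e1 : ∀ x, f' (f x) = x := fun x => e.symm_apply_apply x
  have H1 := MH.map (A' := Polynomial (MvPolynomial (Fin d) (Polynomial K))) f H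
  simp only [ef] at H1
  have h2 := patch (F.map f) (fun i => MvPolynomial.C (h i)) (TT_loc hd K m (F.map f) h H1)
  have H3 := H1.map (Polynomial.evalRingHom 0)
  simp only [Polynomial.coe_evalRingHom, Polynomial.eval_C] at H3
  have h4 := meq_map (A' := Polynomial (MvPolynomial (Fin d) (Polynomial K))) Polynomial.C (hd K m _ h H3)
  have e4 := DM_map (m := m) (A' := Polynomial (MvPolynomial (Fin d) (Polynomial K))) Polynomial.C
    (fun i => (MvPolynomial.C (h i) : MvPolynomial (Fin d) (Polynomial K)))
  rw [e4] at h4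
  have h5 := meq_map f' (meq_trans h2 h4)
  rw [DM_map] at h5
  simp only [← ef, e1] at h5
  have : (F.map f).map f' = F := by ext i j; simp [e1]
  rwa [this] at h5

theorem TT_all (d : ℕ) : TT.{u} d := by
  induction d with
  | zero => exact TT_zero
  | succ d ih => exact TT_succ ih

end Part8

section Part9
universe u

theorem TR (n : ℕ) (hn : 0 < n) (K : Type u) [Field K] (m : ℕ)
    (F : Matrix (Fin m) (Fin m) (MvPolynomial (Fin n) K)) (h : ℕ → MvPolynomial (Fin n) K)
    (hs : ∀ i, h i ∈ MvPolynomial.supported K {(⟨n - 1, by omega⟩ : Fin n)})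
    (H : MH F h) : MatEquiv F (DM m h) := by
  obtain ⟨d, rfl⟩ : ∃ d, n = d + 1 := ⟨n - 1, by omega⟩
  let e : MvPolynomial (Fin (d+1)) K ≃ₐ[K] MvPolynomial (Fin d) (Polynomial K) :=
    (MvPolynomial.renameEquiv K (_root_.finSuccEquivLast (n := d))).trans (MvPolynomial.optionEquivRight K (Fin d))
  let f : CRHom (MvPolynomial (Fin (d+1)) K) (MvPolynomial (Fin d) (Polynomial K)) := e.toRingEquiv.toRingHom
  let f' : CRHom (MvPolynomial (Fin d) (Polynomial K)) (MvPolynomial (Fin (d+1)) K) := e.symm.toRingEquiv.toRingHom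
  have e1 : ∀ x, f' (f x) = x := fun x => e.symm_apply_apply x
  have hr : ∀ i, ∃ q : Polynomial K, f (h i) = MvPolynomial.C q := by
    intro i
    have hi := hs i
    generalize h i = a at hi
    change a ∈ Algebra.adjoin K _ at hi
    induction hi using Algebra.adjoin_induction with
    | mem x hx =>
      obtain ⟨t, ht, rfl⟩ := hx
      have ht' : t = Fin.last d := by
        rw [Set.mem_singleton_iff] at ht
        rw [ht]; rfl
      subst ht'
      refine ⟨Polynomial.X, ?_⟩
      change e (MvPolynomial.X (Fin.last d)) = _
      simp [e]
    | algebraMap r =>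
      refine ⟨Polynomial.C r, ?_⟩
      change e (algebraMap _ _ r) = _
      rw [AlgEquiv.commutes]
      rfl
    | add x y _ _ hx hy =>
      obtain ⟨q, hq⟩ := hx
      obtain ⟨q', hq'⟩ := hy
      exact ⟨q + q', by rw [map_add, hq, hq', map_add]⟩
    | mul x y _ _ hx hy =>
      obtain ⟨q, hq⟩ := hx
      obtain ⟨q', hq'⟩ := hy
      exact ⟨q * q', by rw [map_mul, hq, hq', map_mul]⟩
  choose q hq using hr
  have E : (fun i => f (h i)) = fun i => MvPolynomial.C (q i) := funext hq
  have H1 := MH.map f H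
  rw [E] at H1
  have h2 := TT_all d K m (F.map f) q H1
  rw [← E] at h2
  have h3 := meq_map f' h2
  rw [DM_map] at h3
  simp only [e1] at h3
  have : (F.map f).map f' = F := by ext i j; simp [e1]
  rwa [this] at h3

section fin
variable {R : Type*} [CommRing R]

theorem chain_prod_dvd (h : ℕ → R) (hh : ∀ i j, i ≤ j → h i ∣ h j) (k : ℕ) :
    ∀ s : Finset ℕ, s.card = k → ∏ i ∈ Finset.range k, h i ∣ ∏ i ∈ s, h i := by
  induction k with
  | zero => intro s hs; simp
  | succ k ih =>
    intro s hs
    have hne : s.Nonempty := by rw [← Finset.card_pos]; omega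
    have hm := s.max'_mem hne
    have hk : k ≤ s.max' hne := by
      have : s ⊆ Finset.range (s.max' hne + 1) := by
        intro x hx
        have := s.le_max' x hx
        simp; omega
      have := Finset.card_le_card this
      rw [Finset.card_range] at this
      omega
    rw [Finset.prod_range_succ, ← Finset.prod_erase_mul s h hm]
    exact mul_dvd_mul (ih _ (by rw [Finset.card_erase_of_mem hm]; omega)) (hh _ _ hk)

theorem minors_diag {m k : ℕ} (h : ℕ → R) (hh : ∀ i, h i ∣ h (i+1)) (p : R)
    (hp : p ∈ minorsSet (DM m h) k) : ∏ i ∈ Finset.range k, h i ∣ p := by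
  have hh' : ∀ i j, i ≤ j → h i ∣ h j := by
    intro i j hij
    induction hij with
    | refl => exact dvd_refl _
    | step _ ih => exact ih.trans (hh _)
  obtain ⟨r, c, rfl⟩ := hp
  rw [Matrix.det_apply]
  refine Finset.dvd_sum fun σ _ => ?_
  rw [Units.smul_def, zsmul_eq_mul]
  refine Dvd.dvd.mul_left ?_ _
  have h1 : ∏ i ∈ Finset.range k, h i ∣ ∏ i : Fin k, h (c i) := by
    have := chain_prod_dvd h hh' k (Finset.univ.map (c.trans Fin.valEmbedding)) (by simp)
    simpa using this
  refine h1.trans (Finset.prod_dvd_prod_of_dvd _ _ fun i _ => ?_)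
  simp only [DM, Matrix.submatrix_apply, Matrix.diagonal_apply]
  split_ifs with hi
  · rw [hi]
  · exact dvd_zero _

theorem span_minors_diag_le {m k : ℕ} (h : ℕ → R) (hh : ∀ i, h i ∣ h (i+1)) 
    (U W : Matrix (Fin m) (Fin m) R) :
    Ideal.span (minorsSet (U * DM m h * W) k) ≤ Ideal.span {∏ i ∈ Finset.range k, h i} := by
  refine (minors_mul_le U _ W).trans ?_
  rw [Ideal.span_le]
  intro p hp
  exact Ideal.mem_span_singleton.2 (minors_diag h hh p hp)

theorem span_minors_map {A' : Type*} [CommRing A'] (f : R →+* A') {m k : ℕ} (F : Matrix (Fin m) (Fin m) R) :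
    Ideal.span (minorsSet (F.map f) k) = (Ideal.span (minorsSet F k)).map f := by
  have e1 : minorsSet (F.map f) k = f '' (minorsSet F k) := by
    refine Set.ext fun d => ⟨?_, ?_⟩
    · rintro ⟨r, c, rfl⟩
      exact ⟨_, ⟨r, c, rfl⟩, by rw [RingHom.map_det]; rfl⟩
    · rintro ⟨_, ⟨r, c, rfl⟩, rfl⟩
      exact ⟨r, c, by rw [RingHom.map_det]; rfl⟩
  rw [e1, Ideal.map_span]

theorem span_of_gcd {m k : ℕ} (F : Matrix (Fin m) (Fin m) R) (d : R)
    (h1 : IsGcdMinors F k d) (h2 : reducedIdeal F k d = ⊤) :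
    Ideal.span (minorsSet F k) = Ideal.span {d} := by
  apply le_antisymm
  · rw [Ideal.span_le]
    intro p hp
    exact Ideal.mem_span_singleton.2 (h1.1 p hp)
  · rw [Ideal.span_singleton_le_iff_mem]
    have : reducedIdeal F k d ≤ Submodule.comap (LinearMap.mulLeft R d) (Ideal.span (minorsSet F k)) := by
      unfold reducedIdeal
      rw [Ideal.span, Submodule.span_le]
      intro v hv
      exact Ideal.subset_span hv
    rw [h2] at this
    have h3 := this (show (1:R) ∈ (⊤ : Ideal R) from trivial)
    simpa using h3

theorem span_minors_zero {m : ℕ} (F : Matrix (Fin m) (Fin m) R) :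
    Ideal.span (minorsSet F 0) = Ideal.span {1} := by
  congr 1
  ext p
  constructor
  · rintro ⟨r, c, rfl⟩; simp
  · rintro rfl
    exact ⟨⟨Fin.elim0, fun i => i.elim0⟩, ⟨Fin.elim0, fun i => i.elim0⟩, by simp⟩

/-- diagonal with last entry `w` -/
def EE (r : ℕ) (w : R) : Matrix (Fin (r+1)) (Fin (r+1)) R :=
  Matrix.diagonal fun i => if i = Fin.last r then w else 1

/-- `T(a)` -/
def TM (r : ℕ) (t : Fin (r+1) → R) (a : R) : Matrix (Fin (r+1)) (Fin (r+1)) R :=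
  Matrix.of fun i j => if j = Fin.last r then (if i = Fin.last r then t i else t i * a) else
    if i = j then 1 else 0

theorem TM_det (r : ℕ) (t : Fin (r+1) → R) (a : R) : (TM r t a).det = t (Fin.last r) := by
  rw [Matrix.det_of_upperTriangular]
  · rw [Finset.prod_eq_single (Fin.last r)]
    · simp [TM]
    · intro b _ hb; simp [TM, hb]
    · simp
  · intro i j hij
    have hij' : j < i := hij
    have h1 : j ≠ Fin.last r := fun h => by
      rw [h] at hij'; exact absurd (Fin.le_last i) (not_le.2 hij')
    simp [TM, h1, hij'.ne']

theorem TM_comm (r : ℕ) (t : Fin (r+1) → R) (w : R) :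
    TM r t 1 * EE r w = EE r w * TM r t w := by
  ext i j
  simp only [EE, Matrix.mul_diagonal, Matrix.diagonal_mul, TM, Matrix.of_apply]
  by_cases hj : j = Fin.last r <;> by_cases hi : i = Fin.last r <;> by_cases hij : i = j <;>
    simp_all [mul_comm]

theorem final_abs [IsDomain R] (r : ℕ) (h : ℕ → R) (hh : ∀ i, h i ∣ h (i+1))
    (h0 : ∀ i, i ≤ r → h i ≠ 0) (V U W : Matrix (Fin (r+1)) (Fin (r+1)) R)
    (hV : IsUnit V.det) (hU : IsUnit U.det) (hW : IsUnit W.det)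
    (heq : DM (r+1) h * V * EE r 0 = U * (DM (r+1) h * EE r 0) * W) (w : R) :
    MatEquiv (DM (r+1) h * V * EE r w) (DM (r+1) h * EE r w) := by
  set H := DM (r+1) h with hH
  have hUi := Matrix.nonsing_inv_mul U hU
  have hUi' := Matrix.mul_nonsing_inv U hU
  have hdet : H.det ≠ 0 := by
    rw [hH, DM, Matrix.det_diagonal]
    exact Finset.prod_ne_zero_iff.2 fun i _ => h0 _ (by have := i.2; omega)
  -- last column of W
  have hcol : ∀ i, i ≠ Fin.last r → W i (Fin.last r) = 0 := by
    intro i hi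
    have e1 : U⁻¹ * (H * V * EE r 0) = H * EE r 0 * W := by
      rw [heq, ← Matrix.mul_assoc, ← Matrix.mul_assoc, hUi, Matrix.one_mul]
    have e2 := congrFun (congrFun e1 i) (Fin.last r)
    rw [← Matrix.mul_assoc] at e2
    simp [EE, hH, DM, Matrix.mul_diagonal, Matrix.diagonal_mul, hi] at e2
    exact e2.resolve_left (h0 _ (by have := i.2; omega))
  let W' : Matrix (Fin (r+1)) (Fin (r+1)) R := Matrix.of fun i j =>
    if i = Fin.last r then (if j = Fin.last r then 1 else 0) else W i j
  have hW' : IsUnit W'.det := by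
    have e1 : W.det = W (Fin.last r) (Fin.last r) * W'.det := by
      rw [Matrix.det_succ_column W (Fin.last r), Matrix.det_succ_column W' (Fin.last r),
        Finset.sum_eq_single (Fin.last r), Finset.sum_eq_single (Fin.last r)]
      · have : W'.submatrix (Fin.last r).succAbove (Fin.last r).succAbove =
          W.submatrix (Fin.last r).succAbove (Fin.last r).succAbove := by
          ext i j
          simp [W', Fin.castSucc_ne_last]
        rw [this]
        simp [W']
      · intro i _ hi
        simp [W', hi, hcol i hi]
      · simp
      · intro i _ hi
        simp [hcol i hi]
      · simp
    rw [e1] at hW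
    exact isUnit_of_mul_isUnit_right hW
  have hcomm : ∀ a : R, EE r a * W' = W' * EE r a := by
    intro a
    ext i j
    simp only [EE, Matrix.mul_diagonal, Matrix.diagonal_mul, W', Matrix.of_apply]
    by_cases hi : i = Fin.last r <;> by_cases hj : j = Fin.last r <;> simp [hi, hj, hcol]
  have hEW : EE r 0 * W = EE r 0 * W' := by
    ext i j
    simp only [EE, Matrix.diagonal_mul, W', Matrix.of_apply]
    by_cases hi : i = Fin.last r <;> simp [hi]
  have hWi := Matrix.nonsing_inv_mul W' hW'
  have hWi' := Matrix.mul_nonsing_inv W' hW'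
  let X := U⁻¹ * H * (V * W'⁻¹)
  have hXdef : H * V = U * X * W' := by
    simp only [X]
    calc H * V = (U * U⁻¹) * H * V * (W'⁻¹ * W') := by rw [hUi', hWi, Matrix.one_mul, Matrix.mul_one]
      _ = _ := by simp only [Matrix.mul_assoc]
  have hcomm' : W'⁻¹ * EE r 0 = EE r 0 * W'⁻¹ := by
    calc W'⁻¹ * EE r 0 = W'⁻¹ * (EE r 0 * W') * W'⁻¹ := by
          rw [Matrix.mul_assoc, Matrix.mul_assoc, hWi', Matrix.mul_one]
      _ = (W'⁻¹ * W') * EE r 0 * W'⁻¹ := by rw [hcomm]; simp only [Matrix.mul_assoc]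
      _ = _ := by rw [hWi, Matrix.one_mul]
  have hXE : X * EE r 0 = H * EE r 0 := by
    calc X * EE r 0 = U⁻¹ * (H * V * (W'⁻¹ * EE r 0)) := by simp only [X, Matrix.mul_assoc]
      _ = U⁻¹ * ((H * V * EE r 0) * W'⁻¹) := by rw [hcomm']; simp only [Matrix.mul_assoc]
      _ = (U⁻¹ * U) * H * (EE r 0 * W) * W'⁻¹ := by rw [heq]; simp only [Matrix.mul_assoc]
      _ = H * EE r 0 * (W' * W'⁻¹) := by rw [hEW, hUi, Matrix.one_mul]; simp only [Matrix.mul_assoc]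
      _ = _ := by rw [hWi', Matrix.mul_one]
  have hXcol : ∀ i j, j ≠ Fin.last r → X i j = if i = j then h i else 0 := by
    intro i j hj
    have := congrFun (congrFun hXE i) j
    simp only [EE, Matrix.mul_diagonal, hj, if_false, mul_one] at this
    rw [this, hH, DM, Matrix.diagonal_apply]
  have hdiv : ∀ k : Fin (r+1), h k ∣ X k (Fin.last r) := by
    intro k
    have hk := k.2
    -- rows 0..k, cols 0..k-1,last
    let rr : Fin (k+1) ↪ Fin (r+1) := Fin.castLEEmb (by omega)
    let cc : Fin (k+1) ↪ Fin (r+1) :=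
      ⟨fun i => if (i:ℕ) = k then Fin.last r else ⟨i, by omega⟩, by
        intro a b hab
        have ha := a.2
        have hb := b.2
        simp only [Fin.ext_iff] at hab ⊢
        split_ifs at hab with h1 h2 h2
        · omega
        · simp at hab; omega
        · simp at hab; omega
        · simpa using hab⟩
    have hmem : (X.submatrix rr cc).det ∈ Ideal.span {∏ i ∈ Finset.range (k+1), h i} :=
      span_minors_diag_le h hh _ _ (Ideal.subset_span ⟨rr, cc, rfl⟩)
    have hd : (X.submatrix rr cc).det = (∏ i ∈ Finset.range k, h i) * X k (Fin.last r) := by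
      rw [Matrix.det_of_upperTriangular]
      · rw [Fin.prod_univ_castSucc]
        congr 1
        · rw [Finset.prod_range]
          refine Finset.prod_congr rfl fun i _ => ?_
          have hi := i.2
          have hne : (⟨(i:ℕ), by omega⟩ : Fin (r+1)) ≠ Fin.last r := by
            simp [Fin.ext_iff]; omega
          have e1 : cc i.castSucc = ⟨(i:ℕ), by omega⟩ := by
            change (if ((i.castSucc : Fin (k+1)) : ℕ) = k then Fin.last r else _) = _
            rw [if_neg (by simpa using hi.ne)]
            rfl
          have e2 : rr i.castSucc = ⟨(i:ℕ), by omega⟩ := by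
            simp [rr, Fin.ext_iff]
          rw [Matrix.submatrix_apply, e1, e2, hXcol _ _ hne]
          simp
        · have e1 : cc (Fin.last k) = Fin.last r := if_pos rfl
          have e2 : rr (Fin.last k) = k := by simp [rr, Fin.ext_iff]
          rw [Matrix.submatrix_apply, e1, e2]
      · intro i j hij
        have hij' : (j:ℕ) < i := hij
        have hi := i.2
        have hne : (⟨(j:ℕ), by omega⟩ : Fin (r+1)) ≠ Fin.last r := by
          simp [Fin.ext_iff]; omega
        have e1 : cc j = ⟨(j:ℕ), by omega⟩ := by
          have : (j:ℕ) ≠ k := by omega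
          exact if_neg this
        rw [Matrix.submatrix_apply, e1, hXcol _ _ hne, if_neg]
        simp [rr, Fin.ext_iff]; omega
    rw [hd, Ideal.mem_span_singleton, Finset.prod_range_succ] at hmem
    refine (mul_dvd_mul_iff_left ?_).1 hmem
    exact Finset.prod_ne_zero_iff.2 fun i hi => h0 _ (by simp at hi; omega)
  choose t ht using hdiv
  have hXT : X = H * TM r t 1 := by
    ext i j
    rw [hH, DM, Matrix.diagonal_mul]
    by_cases hj : j = Fin.last r
    · subst hj
      rw [ht]
      simp [TM]
    · rw [hXcol i j hj]
      simp [TM, hj]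
  have htu : IsUnit (t (Fin.last r)) := by
    have e1 : H.det * t (Fin.last r) = H.det * ((U⁻¹).det * V.det * (W'⁻¹).det) := by
      have := congrArg Matrix.det hXT
      simp only [X, Matrix.det_mul, TM_det] at this
      rw [← this]; ring
    rw [mul_left_cancel₀ hdet e1]
    exact ((Matrix.isUnit_nonsing_inv_det U hU).mul hV).mul (Matrix.isUnit_nonsing_inv_det W' hW')
  refine ⟨U, TM r t w * W', hU, ?_, ?_⟩
  · rw [Matrix.det_mul, TM_det]; exact htu.mul hW'
  · calc H * V * EE r w = U * X * (W' * EE r w) := by rw [hXdef, Matrix.mul_assoc]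
      _ = U * H * (TM r t 1 * EE r w) * W' := by rw [← hcomm, hXT]; simp only [Matrix.mul_assoc]
      _ = _ := by rw [TM_comm]; simp only [Matrix.mul_assoc]

end fin

end Part9

section Part10
universe u

theorem eps_fix {n : ℕ} (K : Type u) [Field K] (i0 : Fin n) (f : MvPolynomial (Fin n) K) (s : Set (Fin n))
    (hs : i0 ∉ s) (a : MvPolynomial (Fin n) K) (ha : a ∈ MvPolynomial.supported K s) :
    MvPolynomial.aeval (fun i => if i = i0 then f else MvPolynomial.X i) a = a := by
  change a ∈ Algebra.adjoin K _ at ha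
  induction ha using Algebra.adjoin_induction with
  | mem x hx =>
    obtain ⟨t, ht, rfl⟩ := hx
    have : t ≠ i0 := fun h => hs (h ▸ ht)
    simp [this]
  | algebraMap r => simp
  | add x y _ _ hx hy => rw [map_add, hx, hy]
  | mul x y _ _ hx hy => rw [map_mul, hx, hy]

theorem main_aux {K : Type u} [Field K] (n : ℕ) (hn : 2 ≤ n) (r : ℕ)
    (h : ℕ → MvPolynomial (Fin n) K)
    (hsup : ∀ i, h i ∈ MvPolynomial.supported K {(⟨n - 1, by omega⟩ : Fin n)})
    (hchain : ∀ i, h i ∣ h (i+1))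
    (f : MvPolynomial (Fin n) K)
    (hf : f ∈ MvPolynomial.supported K {t : Fin n | (t : ℕ) ≠ 0})
    (V : Matrix (Fin (r+1)) (Fin (r+1)) (MvPolynomial (Fin n) K))
    (hVsup : ∀ i j, V i j ∈ MvPolynomial.supported K {t : Fin n | (t : ℕ) ≠ 0})
    (hVuni : IsUnit V.det)
    (hgcd : ∀ k : ℕ, k ≤ r → 
      Ideal.span (minorsSet (DM (r+1) h * V * EE r (MvPolynomial.X (⟨0, by omega⟩ : Fin n) - f)) k) =
        Ideal.span {∏ i ∈ Finset.range k, h i}) :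
    MatEquiv (DM (r+1) h * V * EE r (MvPolynomial.X (⟨0, by omega⟩ : Fin n) - f))
      (DM (r+1) h * EE r (MvPolynomial.X (⟨0, by omega⟩ : Fin n) - f)) := by
  have hch' : ∀ i j, i ≤ j → h i ∣ h j := by
    intro i j hij
    induction hij with
    | refl => exact dvd_refl _
    | step _ ih => exact ih.trans (hchain _)
  by_cases hr : h r = 0
  · have e1 : DM (r+1) h * EE r (MvPolynomial.X (⟨0, by omega⟩ : Fin n) - f) = DM (r+1) h := by
      unfold DM EE
      rw [Matrix.diagonal_mul_diagonal]
      congr 1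
      ext1 i
      split_ifs with hi
      · rw [hi]; simp [hr]
      · simp
    rw [e1]
    refine TR n (by omega) K (r+1) _ h hsup ⟨?_, hchain⟩
    intro k hk
    rcases Nat.lt_or_ge r k with hk2 | hk2
    · have : k = r + 1 := by omega
      subst this
      apply le_antisymm
      · rw [Matrix.mul_assoc, ← Matrix.one_mul (DM (r+1) h)]
        exact span_minors_diag_le h hchain _ _
      · rw [Finset.prod_range_succ, hr, mul_zero]
        simp
    · exact hgcd k hk2
  · have h0 : ∀ i, i ≤ r → h i ≠ 0 := fun i hi hz => hr (by
      have := hch' i r hi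
      rw [hz] at this
      exact zero_dvd_iff.1 this)
    let ε : CRHom (MvPolynomial (Fin n) K) (MvPolynomial (Fin n) K) :=
      (MvPolynomial.aeval (fun i => if i = (⟨0, by omega⟩ : Fin n) then f else MvPolynomial.X i) :
        MvPolynomial (Fin n) K →ₐ[K] MvPolynomial (Fin n) K).toRingHom
    have fx : ∀ a ∈ MvPolynomial.supported K {t : Fin n | (t : ℕ) ≠ 0}, ε a = a := fun a ha =>
      eps_fix K _ f _ (by simp) a ha
    have fh : ∀ i, ε (h i) = h i := fun i => fx _ (MvPolynomial.supported_mono (by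
      intro t ht
      rw [Set.mem_singleton_iff] at ht
      subst ht
      change n - 1 ≠ 0
      omega) (hsup i))
    have fX : ε (MvPolynomial.X (⟨0, by omega⟩ : Fin n) - f) = 0 := by
      rw [map_sub, fx f hf]
      have : ε (MvPolynomial.X (⟨0, by omega⟩ : Fin n)) = f := by
        change MvPolynomial.aeval _ (MvPolynomial.X _) = f
        rw [MvPolynomial.aeval_X, if_pos rfl]
      rw [this, sub_self]
    have eV : V.map ε = V := by ext1 i j; exact fx _ (hVsup i j)
    have eE : (EE r (MvPolynomial.X (⟨0, by omega⟩ : Fin n) - f)).map ε = EE r 0 := by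
      unfold EE
      rw [Matrix.diagonal_map (map_zero ε)]
      congr 1
      ext1 i
      split_ifs with hi
      · simp [hi, fX]
      · simp [hi]
    have eB : (DM (r+1) h * V * EE r (MvPolynomial.X (⟨0, by omega⟩ : Fin n) - f)).map ε =
        DM (r+1) h * V * EE r 0 := by
      rw [Matrix.map_mul, Matrix.map_mul, DM_map, eV, eE]
      simp only [fh]
    let h' : ℕ → MvPolynomial (Fin n) K := fun i => if i < r then h i else 0
    have hD : DM (r+1) h' = DM (r+1) h * EE r 0 := by
      unfold DM EE
      rw [Matrix.diagonal_mul_diagonal]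
      congr 1
      ext1 i
      have hi := i.2
      by_cases hl : i = Fin.last r
      · simp [h', hl]
      · have : (i:ℕ) < r := by
          have : (i:ℕ) ≠ r := fun h => hl (Fin.ext h)
          omega
        simp [h', hl, this]
    have T := TR n (by omega) K (r+1) (DM (r+1) h * V * EE r 0) h' (by
      intro i
      simp only [h']
      split_ifs
      · exact hsup i
      · exact zero_mem _) ⟨by
        intro k hk
        rcases Nat.lt_or_ge r k with hk2 | hk2
        · have : k = r + 1 := by omega
          subst this
          have hE0 : (EE r 0 : Matrix (Fin (r+1)) (Fin (r+1)) (MvPolynomial (Fin n) K)) =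
              DM (r+1) (fun i => if i < r then 1 else 0) := by
            unfold DM EE
            congr 1
            ext1 i
            have hi := i.2
            by_cases hl : i = Fin.last r
            · simp [hl]
            · have : (i:ℕ) < r := by
                have : (i:ℕ) ≠ r := fun h => hl (Fin.ext h)
                omega
              simp [hl, this]
          have hz : ∏ i ∈ Finset.range (r+1), h' i = 0 := by
            rw [Finset.prod_range_succ]; simp [h']
          rw [hz]
          refine le_antisymm ?_ (by simp)
          rw [hE0, ← Matrix.mul_one (_ * _)]
          refine (span_minors_diag_le _ ?_ _ _).trans ?_
          · intro i
            split_ifs with h1 h2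
            · exact dvd_refl _
            · exact dvd_zero _
            · omega
            · exact dvd_refl _
          · rw [Finset.prod_range_succ]; simp
        · have e1 := congrArg (Ideal.map ε) (hgcd k hk2)
          rw [← span_minors_map, eB, Ideal.map_span, Set.image_singleton, map_prod] at e1
          rw [e1]
          congr 2
          refine Finset.prod_congr rfl fun i hi => ?_
          have : i < r := by simp at hi; omega
          simp [h', this, fh], by
        intro i
        simp only [h']
        split_ifs with h1 h2
        · exact hchain i
        · exact dvd_zero _
        · omega
        · exact dvd_refl _⟩
    rw [hD] at T
    obtain ⟨U, W, hU, hW, heq⟩ := T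
    exact final_abs r h hchain h0 V U W hVuni hU hW heq _

end Part10

end SF

theorem statement0 {K : Type*} [Field K] (n : ℕ) (hn : 2 ≤ n) (l : ℕ) (hl : 0 < l)
    (h : Fin l → MvPolynomial (Fin n) K)
    (hsup : ∀ i : Fin l, h i ∈ MvPolynomial.supported K {(⟨n - 1, by omega⟩ : Fin n)})
    (hchain : ∀ i j : Fin l, i ≤ j → h i ∣ h j)
    (f : MvPolynomial (Fin n) K)
    (hf : f ∈ MvPolynomial.supported K {t : Fin n | (t : ℕ) ≠ 0})
    (V : Matrix (Fin l) (Fin l) (MvPolynomial (Fin n) K))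
    (hVsup : ∀ i j : Fin l, V i j ∈ MvPolynomial.supported K {t : Fin n | (t : ℕ) ≠ 0})
    (hVuni : IsUnit V.det)
    (B : Matrix (Fin l) (Fin l) (MvPolynomial (Fin n) K))
    (hB : B = Matrix.diagonal h * V *
      Matrix.diagonal (fun i : Fin l =>
        if (i : ℕ) = l - 1 then MvPolynomial.X (⟨0, by omega⟩ : Fin n) - f else 1))
    (hgcd : ∀ k : ℕ, 1 ≤ k → k ≤ l - 1 →
      IsGcdMinors B k (∏ j ∈ Finset.univ.filter (fun j : Fin l => (j : ℕ) < k), h j) ∧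
      reducedIdeal B k (∏ j ∈ Finset.univ.filter (fun j : Fin l => (j : ℕ) < k), h j) = ⊤) :
    MatEquiv B (Matrix.diagonal (fun i : Fin l =>
      if (i : ℕ) = l - 1 then (MvPolynomial.X (⟨0, by omega⟩ : Fin n) - f) * h i else h i)) := by
  obtain ⟨r, rfl⟩ : ∃ r, l = r + 1 := ⟨l - 1, by omega⟩
  subst hB
  let h' : ℕ → MvPolynomial (Fin n) K := fun i => if hi : i < r + 1 then h ⟨i, hi⟩ else 0
  have hv : ∀ i : Fin (r+1), h' i = h i := fun i => dif_pos i.2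
  have e1 : Matrix.diagonal h = SF.DM (r+1) h' := by
    unfold SF.DM
    congr 1
    ext1 i
    rw [hv]
  have e2 : Matrix.diagonal (fun i : Fin (r+1) =>
        if (i : ℕ) = r + 1 - 1 then MvPolynomial.X (⟨0, by omega⟩ : Fin n) - f else 1) =
      SF.EE r (MvPolynomial.X (⟨0, by omega⟩ : Fin n) - f) := by
    unfold SF.EE
    congr 1
    ext1 i
    simp [Fin.ext_iff]
  have e3 : Matrix.diagonal (fun i : Fin (r+1) =>
      if (i : ℕ) = r + 1 - 1 then (MvPolynomial.X (⟨0, by omega⟩ : Fin n) - f) * h i else h i) =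
      SF.DM (r+1) h' * SF.EE r (MvPolynomial.X (⟨0, by omega⟩ : Fin n) - f) := by
    rw [← e1, ← e2, Matrix.diagonal_mul_diagonal]
    congr 1
    ext1 i
    split_ifs
    · ring
    · ring
  rw [e3]
  rw [e1, e2] at hgcd ⊢
  refine SF.main_aux n hn r h' ?_ ?_ f hf V hVsup hVuni ?_
  · intro i
    simp only [h']
    split_ifs
    · exact hsup _
    · exact zero_mem _
  · intro i
    simp only [h']
    split_ifs with h1 h2
    · exact hchain _ _ (by simp [Fin.le_def])
    · exact dvd_zero _
    · omega
    · exact dvd_refl _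
  · intro k hk
    rcases Nat.eq_zero_or_pos k with rfl | hk0
    · rw [SF.span_minors_zero]; simp
    · obtain ⟨g1, g2⟩ := hgcd k hk0 (by omega)
      rw [SF.span_of_gcd _ _ g1 g2]
      congr 2
      have : ∏ i ∈ Finset.range k, h' i = ∏ i ∈ (Finset.univ.filter (fun j : Fin (r+1) => (j : ℕ) < k)), h' i := by
        refine (Finset.prod_bij (fun (i : Fin (r+1)) _ => (i : ℕ)) ?_ ?_ ?_ ?_).symm
        · intro i hi
          simpa using hi
        · intro a _ b _ hab
          exact Fin.ext hab
        · intro b hb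
          rw [Finset.mem_range] at hb
          exact ⟨⟨b, by omega⟩, by simpa using hb, rfl⟩
        · intro i _; rfl
      rw [this]
      exact Finset.prod_congr rfl fun i _ => (hv i).symm
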